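/- arXiv:2510.09258 — 3 statements merged into one kernel-verified Lean document; each statement's English description precedes it below -/
import Mathlib

section
/- Let N,k ≥ 1 be integers and p > 1 with p ≤ 1 + 2/(N+2k). Let u0 ∈ L¹(ℝ^{N+k}) satisfy ∫_{ℝ^{N+k}} u0(z) dz > 0. Then there is no global nonnegative weak solution of the Grushin heat equation u_t − Δ_G u = |u|^{p−1}u on ℝ^{N+k} × (0,∞) with initial datum u(·,0) = u0 (i.e., no nonnegative u that is a weak solution on ℝ^{N+k} × [0,T] for every T > 0). -/
open MeasureTheory Real Filter
open scoped ENNReal NNReal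

noncomputable section

abbrev Euc (n : ℕ) : Type := EuclideanSpace ℝ (Fin n)

/-- Second derivative of `f` at `z`, taken twice in the direction `v`. -/
def secondDeriv {N k : ℕ} (f : Euc N × Euc k → ℝ) (z v : Euc N × Euc k) : ℝ :=
  fderiv ℝ (fun w => fderiv ℝ f w v) z v

/-- The Laplacian in the `x`-variables. -/
def laplacianX {N k : ℕ} (f : Euc N × Euc k → ℝ) (z : Euc N × Euc k) : ℝ :=
  ∑ i : Fin N, secondDeriv f z (EuclideanSpace.single i 1, 0)

/-- The Laplacian in the `y`-variables. -/
def laplacianY {N k : ℕ} (f : Euc N × Euc k → ℝ) (z : Euc N × Euc k) : ℝ :=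
  ∑ j : Fin k, secondDeriv f z (0, EuclideanSpace.single j 1)

/-- The Grushin operator `Δ_G = Δ_x + |x|² Δ_y`. -/
def grushin {N k : ℕ} (f : Euc N × Euc k → ℝ) (z : Euc N × Euc k) : ℝ :=
  laplacianX f z + ‖z.1‖ ^ 2 * laplacianY f z

/-- The power nonlinearity `|v|^(p-1) · v`. -/
def absPow (p v : ℝ) : ℝ := |v| ^ (p - 1) * v

/-- The Riemann–Liouville fractional integral `I^α_{0|t} f`. -/
def fracInt (α : ℝ) (f : ℝ → ℝ) (t : ℝ) : ℝ :=
  (1 / Real.Gamma α) * ∫ s in Set.Ioc (0 : ℝ) t, (t - s) ^ (α - 1) * f s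


/-- Weak solution on `ℝ^{N+k} × [0,T]` of `u_t − Δ_G u = |u|^{p−1}u`, `u(·,0) = u0`. -/
def IsWeakSolutionHeat (N k : ℕ) (p T : ℝ) (u0 : Euc N × Euc k → ℝ)
    (u : Euc N × Euc k → ℝ → ℝ) : Prop :=
  LocallyIntegrableOn (fun q : (Euc N × Euc k) × ℝ => absPow p (u q.1 q.2))
      (Set.univ ×ˢ Set.Ioo 0 T) volume ∧
  ∀ φ : Euc N × Euc k → ℝ → ℝ,
    ContDiff ℝ 2 (fun q : (Euc N × Euc k) × ℝ => φ q.1 q.2) →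
    HasCompactSupport (fun q : (Euc N × Euc k) × ℝ => φ q.1 q.2) →
    (∀ z, φ z T = 0) →
    ((∫ z, u z T * φ z T) - ∫ z, u0 z * φ z 0) =
      (∫ t in Set.Ioc (0 : ℝ) T, ∫ z, absPow p (u z t) * φ z t) +
      (∫ t in Set.Ioc (0 : ℝ) T, ∫ z, u z t * grushin (fun w => φ w t) z) +
      (∫ t in Set.Ioc (0 : ℝ) T, ∫ z, u z t * deriv (φ z) t)

/-!
Test the equation against cutoffs `φ_r = φ ∘ D_r`, where `D_r (x, y, t) = (r x, r² y, r² t)` and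
`r → 0`. The operator `Δ_G + ∂_t` is homogeneous of degree two under `D_r`, and `φ` is a high power
of a bump function, so `|(Δ_G + ∂_t) φ_r| ≤ C r² φ_r^{1/p}`. Young's inequality with the conjugate
exponent `s = p / (p - 1)` then gives, for every `δ > 0`,

  `∫ u^p φ_r + ∫ u₀ φ_r(·, 0) ≤ δ ∫_{A_r} u^p φ_r + δ^{1-s} C^s r^{2s} |supp φ_r|`,

where `A_r = {(Δ_G + ∂_t) φ_r ≠ 0}` escapes to infinity as `r → 0`. The volume of `supp φ_r` scales
as `r^{-(N+2k+2)}`, so the last term stays bounded exactly when `N + 2k + 2 ≤ 2s`, that is, when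
`p ≤ 1 + 2/(N+2k)`.

A priori, `u^p` may fail to be integrable up to `t = 0`. Multiplying `φ_r` by nondecreasing cutoffs
`θ_n(t)` that vanish near `t = 0` removes the initial datum, while the new term `u φ_r ∂_t θ_n`
has the favourable sign; taking `δ = 1/2` yields `u^p ∈ L¹`. The inequality above can then be used
for `φ_r` itself: its first term on the right tends to `0` by dominated convergence, leaving
`∫ u₀ ≤ M δ^{1-s}` with `M` independent of `δ`, and `δ → ∞` gives `∫ u₀ ≤ 0`.
-/

section Integrability

variable {α : Type*} [MeasurableSpace α] {μ : Measure α}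

theorem integrable_of_tendsto_of_integral_le {f : ℕ → α → ℝ} {g : α → ℝ} {M : ℝ}
    (hf : ∀ n, Integrable (f n) μ) (hf_nonneg : ∀ n, 0 ≤ᵐ[μ] f n)
    (hle : ∀ n, ∫ x, f n x ∂μ ≤ M) (hlim : ∀ᵐ x ∂μ, Tendsto (f · x) atTop (nhds (g x))) :
    Integrable g μ := by
  have hg : AEStronglyMeasurable g μ :=
    aestronglyMeasurable_of_tendsto_ae atTop (fun n => (hf n).aestronglyMeasurable) hlim
  have hle_lintegral (n : ℕ) : ∫⁻ x, ‖f n x‖ₑ ∂μ ≤ ENNReal.ofReal M := by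
    rw [← ofReal_integral_norm_eq_lintegral_enorm (hf n)]
    refine ENNReal.ofReal_le_ofReal (le_of_eq_of_le (integral_congr_ae ?_) (hle n))
    filter_upwards [hf_nonneg n] with x hx using Real.norm_of_nonneg hx
  refine ⟨hg, lt_of_le_of_lt ?_ (ENNReal.ofReal_lt_top (r := M))⟩
  calc ∫⁻ x, ‖g x‖ₑ ∂μ = ∫⁻ x, liminf (fun n => ‖f n x‖ₑ) atTop ∂μ :=
        lintegral_congr_ae (hlim.mono fun x hx => hx.enorm.liminf_eq.symm)
    _ ≤ liminf (fun n => ∫⁻ x, ‖f n x‖ₑ ∂μ) atTop :=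
        lintegral_liminf_le' fun n => (hf n).aestronglyMeasurable.enorm
    _ ≤ ENNReal.ofReal M := liminf_le_of_frequently_le' (.of_forall hle_lintegral)

theorem integrableOn_mul_of_continuous_of_eq_zero [TopologicalSpace α] [T2Space α]
    [OpensMeasurableSpace α] {S K : Set α} {f g : α → ℝ}
    (hS : MeasurableSet S) (hK : IsCompact K) (hf : IntegrableOn f (K ∩ S) μ)
    (hg : Continuous g) (hgK : ∀ x ∉ K, g x = 0) : IntegrableOn (fun x => f x * g x) S μ := by
  obtain ⟨C, hC⟩ := hK.exists_bound_of_continuousOn hg.continuousOn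
  have hKS : IntegrableOn (fun x => f x * g x) (K ∩ S) μ :=
    hf.mul_bdd (c := C) hg.aestronglyMeasurable
      (ae_restrict_of_forall_mem (hK.measurableSet.inter hS) fun x hx => hC x hx.1)
  refine hKS.of_forall_sdiff_eq_zero hS fun x hx => ?_
  rw [hgK x fun hxK => hx.2 ⟨hxK, hx.1⟩, mul_zero]

theorem integrableOn_mul_of_hasCompactSupport [TopologicalSpace α] [T2Space α]
    [OpensMeasurableSpace α] {S : Set α} {f g : α → ℝ}
    (hS : MeasurableSet S) (hg : Continuous g) (hgc : HasCompactSupport g)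
    (hf : IntegrableOn f (tsupport g ∩ S) μ) : IntegrableOn (fun x => f x * g x) S μ :=
  integrableOn_mul_of_continuous_of_eq_zero hS hgc hf hg
    fun _ => image_eq_zero_of_notMem_tsupport

theorem aestronglyMeasurable_of_rpow {f : α → ℝ} {p : ℝ} (hp : p ≠ 0) (hf : 0 ≤ᵐ[μ] f)
    (hfp : AEStronglyMeasurable (fun x => f x ^ p) μ) : AEStronglyMeasurable f μ := by
  refine (hfp.aemeasurable.pow_const p⁻¹).aestronglyMeasurable.congr ?_
  filter_upwards [hf] with x hx using rpow_rpow_inv hx hp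

theorem integrable_of_integrable_rpow [IsFiniteMeasure μ] {f : α → ℝ} {p : ℝ} (hp : 1 ≤ p)
    (hf : 0 ≤ᵐ[μ] f) (hfp : Integrable (fun x => f x ^ p) μ) : Integrable f μ := by
  refine ((integrable_const 1).add hfp).mono'
    (aestronglyMeasurable_of_rpow (by positivity) hf hfp.aestronglyMeasurable) ?_
  filter_upwards [hf] with x hx
  rw [norm_of_nonneg hx, Pi.add_apply]
  rcases le_total (f x) 1 with hle | hge
  · linarith [rpow_nonneg hx p]
  · linarith [self_le_rpow_of_one_le hge hp]

end Integrability

theorem mul_le_const_mul_rpow_add_const_mul_rpow {p q δ x y : ℝ} (hpq : p.HolderConjugate q)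
    (hδ : 0 < δ) (hx : 0 ≤ x) (hy : 0 ≤ y) : x * y ≤ δ * x ^ p + δ ^ (1 - q) * y ^ q := by
  set l : ℝ := δ ^ (1 / p)
  have hl : 0 < l := rpow_pos_of_pos hδ _
  have hlp : l ^ p = δ := by rw [← rpow_mul hδ.le, one_div_mul_cancel hpq.ne_zero, rpow_one]
  have hlq : l⁻¹ ^ q = δ ^ (1 - q) := by
    have hexp : 1 / p * -q = 1 - q := by linear_combination -hpq.symm.div_conj_eq_sub_one
    rw [inv_rpow hl.le, ← rpow_neg hl.le, ← rpow_mul hδ.le, hexp]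
  calc x * y = (l * x) * (l⁻¹ * y) := by field_simp
    _ ≤ (l * x) ^ p / p + (l⁻¹ * y) ^ q / q :=
        young_inequality_of_nonneg (by positivity) (by positivity) hpq
    _ ≤ (l * x) ^ p + (l⁻¹ * y) ^ q :=
        add_le_add (div_le_self (by positivity) hpq.lt.le)
          (div_le_self (by positivity) hpq.symm.lt.le)
    _ = δ * x ^ p + δ ^ (1 - q) * y ^ q := by
        rw [mul_rpow hl.le hx, mul_rpow (by positivity) hy, hlp, hlq]

section Slices

variable {E F G : Type*} [NormedAddCommGroup E] [NormedSpace ℝ E] [NormedAddCommGroup F]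
  [NormedSpace ℝ F] [NormedAddCommGroup G] [NormedSpace ℝ G]

theorem differentiable_fderiv_apply {f : E → G} (hf : ContDiff ℝ 2 f) (v : E) :
    Differentiable ℝ fun w => fderiv ℝ f w v :=
  ((hf.fderiv_right (m := 1) (by norm_num)).clm_apply contDiff_const).differentiable (by norm_num)

theorem fderiv_slice_fst {f : E × F → G} {z : E} {t : F} (hf : DifferentiableAt ℝ f (z, t))
    (v : E) : fderiv ℝ (fun w => f (w, t)) z v = fderiv ℝ f (z, t) (v, 0) := by
  have h : HasFDerivAt (fun w => f (w, t)) ((fderiv ℝ f (z, t)).comp (.inl ℝ E F)) z :=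
    hf.hasFDerivAt.comp z (hasFDerivAt_prodMk_left z t)
  simp [h.fderiv]

theorem deriv_slice_snd {f : E × ℝ → G} {z : E} {t : ℝ} (hf : DifferentiableAt ℝ f (z, t)) :
    deriv (fun s => f (z, s)) t = fderiv ℝ f (z, t) (0, 1) := by
  have h : HasFDerivAt (fun s => f (z, s)) ((fderiv ℝ f (z, t)).comp (.inr ℝ E ℝ)) t :=
    hf.hasFDerivAt.comp t (hasFDerivAt_prodMk_right z t)
  simp [← fderiv_apply_one_eq_deriv, h.fderiv]

end Slices

section Grushin

variable {N k : ℕ} {f : Euc N × Euc k → ℝ}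

theorem secondDeriv_comp_clm (hf : ContDiff ℝ 2 f)
    (L : (Euc N × Euc k) →L[ℝ] (Euc N × Euc k)) (z v : Euc N × Euc k) :
    secondDeriv (fun w => f (L w)) z v = secondDeriv f (L z) (L v) := by
  have hfderiv (g : Euc N × Euc k → ℝ) (hg : Differentiable ℝ g) (w : Euc N × Euc k) :
      fderiv ℝ (fun w => g (L w)) w v = fderiv ℝ g (L w) (L v) := by
    have h : HasFDerivAt (fun w => g (L w)) ((fderiv ℝ g (L w)).comp L) w :=
      (hg (L w)).hasFDerivAt.comp w L.hasFDerivAt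
    simp [h.fderiv]
  simp only [secondDeriv, hfderiv f (hf.differentiable (by norm_num))]
  exact hfderiv _ (differentiable_fderiv_apply hf (L v)) z

theorem secondDeriv_smul (hf : ContDiff ℝ 2 f) (z v : Euc N × Euc k) (c : ℝ) :
    secondDeriv f z (c • v) = c ^ 2 * secondDeriv f z v := by
  simp only [secondDeriv, map_smul, smul_eq_mul,
    fderiv_const_mul (differentiable_fderiv_apply hf v z), smul_apply]
  ring

theorem secondDeriv_mul_const (hf : ContDiff ℝ 2 f) (z v : Euc N × Euc k) (c : ℝ) :
    secondDeriv (fun w => f w * c) z v = secondDeriv f z v * c := by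
  have hd : Differentiable ℝ f := hf.differentiable (by norm_num)
  simp only [secondDeriv, fderiv_mul_const (hd _), smul_apply, smul_eq_mul,
    fderiv_const_mul (differentiable_fderiv_apply hf v z)]
  ring

theorem secondDeriv_pow (hf : ContDiff ℝ 2 f) (z v : Euc N × Euc k) (m : ℕ) :
    secondDeriv (fun w => f w ^ (m + 2)) z v
      = f z ^ m * ((m + 2) * f z * secondDeriv f z v
          + (m + 2) * (m + 1) * fderiv ℝ f z v ^ 2) := by
  have hd : Differentiable ℝ f := hf.differentiable (by norm_num)
  have hfirst (w : Euc N × Euc k) :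
      fderiv ℝ (fun w => f w ^ (m + 2)) w v = (m + 2) * (f w ^ (m + 1) * fderiv ℝ f w v) := by
    rw [fderiv_fun_pow _ (hd w)]
    simp [mul_assoc]
  have hd1 : DifferentiableAt ℝ (fun w => f w ^ (m + 1)) z := (hd z).fun_pow _
  have hd2 := differentiable_fderiv_apply hf v z
  simp only [secondDeriv, hfirst]
  rw [fderiv_const_mul (hd1.fun_mul hd2), fderiv_fun_mul hd1 hd2, fderiv_fun_pow _ (hd z)]
  simp only [add_tsub_cancel_right, nsmul_eq_mul, Nat.cast_add, Nat.cast_one, smul_add,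
    add_apply, smul_apply, smul_eq_mul]
  ring

theorem secondDeriv_eq_zero_of_eventuallyEq_const {z : Euc N × Euc k} {c : ℝ}
    (h : f =ᶠ[nhds z] fun _ => c) (v : Euc N × Euc k) : secondDeriv f z v = 0 := by
  have hfderiv : (fun w => fderiv ℝ f w v) =ᶠ[nhds z] fun _ => 0 :=
    (h.fderiv (𝕜 := ℝ)).mono fun w hw => by simp [hw]
  simp [secondDeriv, hfderiv.fderiv_eq]

theorem secondDeriv_slice {φ : (Euc N × Euc k) × ℝ → ℝ} (hφ : ContDiff ℝ 2 φ)
    (q : (Euc N × Euc k) × ℝ) (v : Euc N × Euc k) :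
    secondDeriv (fun w => φ (w, q.2)) q.1 v
      = fderiv ℝ (fun r => fderiv ℝ φ r (v, 0)) q (v, 0) := by
  have hd : Differentiable ℝ φ := hφ.differentiable (by norm_num)
  simp only [secondDeriv, fderiv_slice_fst (hd _)]
  exact fderiv_slice_fst (differentiable_fderiv_apply hφ (v, 0) q) v

theorem continuous_secondDeriv_slice {φ : (Euc N × Euc k) × ℝ → ℝ} (hφ : ContDiff ℝ 2 φ)
    (v : Euc N × Euc k) :
    Continuous fun q : (Euc N × Euc k) × ℝ => secondDeriv (fun w => φ (w, q.2)) q.1 v := by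
  have hφv : ContDiff ℝ 1 fun r => fderiv ℝ φ r (v, 0) :=
    (hφ.fderiv_right (by norm_num)).clm_apply contDiff_const
  simp only [secondDeriv_slice hφ]
  exact (hφv.continuous_fderiv (by norm_num)).clm_apply continuous_const

theorem grushin_mul_const (hf : ContDiff ℝ 2 f) (z : Euc N × Euc k) (c : ℝ) :
    grushin (fun w => f w * c) z = grushin f z * c := by
  simp only [grushin, laplacianX, laplacianY, secondDeriv_mul_const hf, ← Finset.sum_mul]
  ring

theorem grushin_eq_zero_of_eventuallyEq_const {z : Euc N × Euc k} {c : ℝ}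
    (h : f =ᶠ[nhds z] fun _ => c) : grushin f z = 0 := by
  simp [grushin, laplacianX, laplacianY, secondDeriv_eq_zero_of_eventuallyEq_const h]

/-- The carré du champ `|∇_x f|² + |x|² |∇_y f|²` of the Grushin operator, which appears when the
operator is applied to powers of `f`. -/
def grushinGradSq (f : Euc N × Euc k → ℝ) (z : Euc N × Euc k) : ℝ :=
  (∑ i : Fin N, fderiv ℝ f z (EuclideanSpace.single i 1, 0) ^ 2)
    + ‖z.1‖ ^ 2 * ∑ j : Fin k, fderiv ℝ f z (0, EuclideanSpace.single j 1) ^ 2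

theorem grushin_pow (hf : ContDiff ℝ 2 f) (z : Euc N × Euc k) (m : ℕ) :
    grushin (fun w => f w ^ (m + 2)) z
      = f z ^ m * ((m + 2) * f z * grushin f z + (m + 2) * (m + 1) * grushinGradSq f z) := by
  simp only [grushin, laplacianX, laplacianY, grushinGradSq, secondDeriv_pow hf,
    ← Finset.mul_sum, Finset.sum_add_distrib]
  ring

/-- The dilation `(x, y) ↦ (r x, r² y)`, for which the Grushin operator is homogeneous of
degree two. -/
def spaceDilation (N k : ℕ) (r : ℝ) : (Euc N × Euc k) →L[ℝ] (Euc N × Euc k) :=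
  (r • ContinuousLinearMap.id ℝ (Euc N)).prodMap (r ^ 2 • ContinuousLinearMap.id ℝ (Euc k))

theorem spaceDilation_apply (r : ℝ) (z : Euc N × Euc k) :
    spaceDilation N k r z = (r • z.1, r ^ 2 • z.2) := rfl

theorem grushin_comp_spaceDilation (hf : ContDiff ℝ 2 f) (r : ℝ) (z : Euc N × Euc k) :
    grushin (fun w => f (spaceDilation N k r w)) z
      = r ^ 2 * grushin f (spaceDilation N k r z) := by
  have hx (e : Euc N) : spaceDilation N k r (e, 0) = r • (e, 0) := by simp [spaceDilation_apply]
  have hy (e : Euc k) : spaceDilation N k r (0, e) = r ^ 2 • (0, e) := by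
    simp [spaceDilation_apply]
  have hnorm : ‖(spaceDilation N k r z).1‖ ^ 2 = r ^ 2 * ‖z.1‖ ^ 2 := by
    rw [spaceDilation_apply, norm_smul, mul_pow, norm_eq_abs, sq_abs]
  simp only [grushin, laplacianX, laplacianY, secondDeriv_comp_clm hf, hx, hy,
    secondDeriv_smul hf, ← Finset.mul_sum, hnorm]
  ring

end Grushin

section HeatAdjoint

/-- Points `((x, y), t)`, where all real times `t` are allowed so that test functions may be
supported across `t = 0`. -/
abbrev SpaceTime (N k : ℕ) : Type := (Euc N × Euc k) × ℝ

/-- The domain `ℝ^{N+k} × (0, ∞)` of a global solution. -/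
def future (N k : ℕ) : Set (SpaceTime N k) := Set.univ ×ˢ Set.Ioi 0

/-- The operator `Δ_G + ∂_t`, adjoint to the Grushin heat operator `∂_t - Δ_G`. -/
def heatAdjoint {N k : ℕ} (φ : SpaceTime N k → ℝ) (q : SpaceTime N k) : ℝ :=
  grushin (fun z => φ (z, q.2)) q.1 + deriv (fun t => φ (q.1, t)) q.2

variable {N k : ℕ} {φ : SpaceTime N k → ℝ}

theorem isOpen_future : IsOpen (future N k) := isOpen_univ.prod isOpen_Ioi

theorem measurableSet_future : MeasurableSet (future N k) := isOpen_future.measurableSet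

theorem contDiff_slice (hφ : ContDiff ℝ 2 φ) (t : ℝ) : ContDiff ℝ 2 fun z => φ (z, t) :=
  hφ.comp (contDiff_prodMk_left t)

theorem differentiable_slice (hφ : ContDiff ℝ 2 φ) (z : Euc N × Euc k) :
    Differentiable ℝ fun t => φ (z, t) :=
  (hφ.comp (contDiff_prodMk_right z)).differentiable (by norm_num)

theorem continuous_grushin_slice (hφ : ContDiff ℝ 2 φ) :
    Continuous fun q : SpaceTime N k => grushin (fun z => φ (z, q.2)) q.1 := by
  have := continuous_secondDeriv_slice hφ
  simp only [grushin, laplacianX, laplacianY]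
  fun_prop

theorem continuous_deriv_slice (hφ : ContDiff ℝ 2 φ) :
    Continuous fun q : SpaceTime N k => deriv (fun t => φ (q.1, t)) q.2 := by
  simp only [deriv_slice_snd (hφ.differentiable (by norm_num) _)]
  exact (hφ.continuous_fderiv (by norm_num)).clm_apply continuous_const

theorem continuous_grushinGradSq_slice (hφ : ContDiff ℝ 2 φ) :
    Continuous fun q : SpaceTime N k => grushinGradSq (fun z => φ (z, q.2)) q.1 := by
  have := hφ.continuous_fderiv (by norm_num)
  simp only [grushinGradSq, fderiv_slice_fst (hφ.differentiable (by norm_num) _)]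
  fun_prop

theorem continuous_heatAdjoint (hφ : ContDiff ℝ 2 φ) : Continuous (heatAdjoint φ) :=
  (continuous_grushin_slice hφ).add (continuous_deriv_slice hφ)

theorem grushin_slice_eq_zero_of_eventuallyEq_const {q : SpaceTime N k} {c : ℝ}
    (h : φ =ᶠ[nhds q] fun _ => c) : grushin (fun z => φ (z, q.2)) q.1 = 0 :=
  grushin_eq_zero_of_eventuallyEq_const <|
    (Continuous.prodMk_left q.2).continuousAt.eventually (p := fun r => φ r = c) h

theorem deriv_slice_eq_zero_of_eventuallyEq_const {q : SpaceTime N k} {c : ℝ}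
    (h : φ =ᶠ[nhds q] fun _ => c) : deriv (fun t => φ (q.1, t)) q.2 = 0 := by
  have hslice : (fun t => φ (q.1, t)) =ᶠ[nhds q.2] fun _ => c :=
    (Continuous.prodMk_right q.1).continuousAt.eventually (p := fun r => φ r = c) h
  simp [hslice.deriv_eq]

theorem heatAdjoint_eq_zero_of_eventuallyEq_const {q : SpaceTime N k} {c : ℝ}
    (h : φ =ᶠ[nhds q] fun _ => c) : heatAdjoint φ q = 0 := by
  rw [heatAdjoint, grushin_slice_eq_zero_of_eventuallyEq_const h,
    deriv_slice_eq_zero_of_eventuallyEq_const h, add_zero]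

theorem heatAdjoint_eq_zero_of_notMem_tsupport {q : SpaceTime N k} (hq : q ∉ tsupport φ) :
    heatAdjoint φ q = 0 :=
  heatAdjoint_eq_zero_of_eventuallyEq_const (notMem_tsupport_iff_eventuallyEq.mp hq)

theorem heatAdjoint_mul_time (hφ : ContDiff ℝ 2 φ) {θ : ℝ → ℝ} (hθ : Differentiable ℝ θ)
    (q : SpaceTime N k) :
    heatAdjoint (fun q => φ q * θ q.2) q = heatAdjoint φ q * θ q.2 + φ q * deriv θ q.2 := by
  simp only [heatAdjoint, grushin_mul_const (contDiff_slice hφ q.2),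
    deriv_fun_mul (differentiable_slice hφ q.1 q.2) (hθ q.2)]
  ring

theorem heatAdjoint_pow (hφ : ContDiff ℝ 2 φ) (q : SpaceTime N k) (m : ℕ) :
    heatAdjoint (fun q => φ q ^ (m + 2)) q
      = φ q ^ m * ((m + 2) * φ q * heatAdjoint φ q
          + (m + 2) * (m + 1) * grushinGradSq (fun z => φ (z, q.2)) q.1) := by
  simp only [heatAdjoint, grushin_pow (contDiff_slice hφ q.2),
    deriv_fun_pow (differentiable_slice hφ q.1 q.2)]
  push_cast
  ring

theorem exists_abs_heatAdjoint_pow_le (hφ : ContDiff ℝ 2 φ) (hφc : HasCompactSupport φ)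
    (hφ_nonneg : ∀ q, 0 ≤ φ q) (m : ℕ) :
    ∃ C, 0 ≤ C ∧ ∀ q, |heatAdjoint (fun q => φ q ^ (m + 2)) q| ≤ C * φ q ^ m := by
  have hcont : Continuous fun q : SpaceTime N k => (m + 2) * φ q * heatAdjoint φ q
      + (m + 2) * (m + 1) * grushinGradSq (fun z => φ (z, q.2)) q.1 := by
    have := hφ.continuous
    have := continuous_heatAdjoint hφ
    have := continuous_grushinGradSq_slice hφ
    fun_prop
  obtain ⟨C, hC⟩ := hφc.exists_bound_of_continuousOn hcont.continuousOn
  refine ⟨max C 0, le_max_right _ _, fun q => ?_⟩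
  by_cases hq : q ∈ tsupport φ
  · rw [heatAdjoint_pow hφ, abs_mul, abs_of_nonneg (pow_nonneg (hφ_nonneg q) m), mul_comm]
    exact mul_le_mul_of_nonneg_right ((hC q hq).trans (le_max_left _ _))
      (pow_nonneg (hφ_nonneg q) m)
  · have hzero : (fun q => φ q ^ (m + 2)) =ᶠ[nhds q] fun _ => 0 :=
      (notMem_tsupport_iff_eventuallyEq.mp hq).mono fun r hr => by simp [hr]
    rw [heatAdjoint_eq_zero_of_eventuallyEq_const hzero, abs_zero]
    exact mul_nonneg (le_max_right _ _) (pow_nonneg (hφ_nonneg q) m)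

end HeatAdjoint

section Dilation

variable {N k : ℕ} {φ : SpaceTime N k → ℝ} {r : ℝ}

/-- The parabolic dilation `(x, y, t) ↦ (r x, r² y, r² t)`, for which `Δ_G + ∂_t` is homogeneous
of degree two. -/
def dilation (N k : ℕ) (r : ℝ) : SpaceTime N k →L[ℝ] SpaceTime N k :=
  (spaceDilation N k r).prodMap (r ^ 2 • ContinuousLinearMap.id ℝ ℝ)

theorem dilation_apply (r : ℝ) (q : SpaceTime N k) :
    dilation N k r q = (spaceDilation N k r q.1, r ^ 2 * q.2) := rfl

theorem heatAdjoint_comp_dilation (hφ : ContDiff ℝ 2 φ) (r : ℝ) (q : SpaceTime N k) :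
    heatAdjoint (fun q => φ (dilation N k r q)) q = r ^ 2 * heatAdjoint φ (dilation N k r q) := by
  simp only [heatAdjoint, dilation_apply, grushin_comp_spaceDilation (contDiff_slice hφ _)]
  rw [deriv_comp_mul_left (r ^ 2) (fun t => φ (spaceDilation N k r q.1, t)), smul_eq_mul]
  ring

theorem det_dilation (N k : ℕ) (r : ℝ) :
    LinearMap.det (dilation N k r : SpaceTime N k →ₗ[ℝ] SpaceTime N k) = r ^ (N + 2 * k + 2) := by
  have h : (dilation N k r : SpaceTime N k →ₗ[ℝ] SpaceTime N k)
      = ((r • LinearMap.id).prodMap (r ^ 2 • LinearMap.id)).prodMap (r ^ 2 • LinearMap.id) := rfl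
  rw [h, LinearMap.det_prodMap, LinearMap.det_prodMap]
  simp only [LinearMap.det_smul, finrank_euclideanSpace, Fintype.card_fin, LinearMap.det_id,
    Module.finrank_self, mul_one]
  ring

theorem volume_preimage_dilation (hr : 0 < r) (S : Set (SpaceTime N k)) :
    volume (dilation N k r ⁻¹' S) = ENNReal.ofReal (r ^ (N + 2 * k + 2))⁻¹ * volume S := by
  have hdet : LinearMap.det (dilation N k r : SpaceTime N k →ₗ[ℝ] SpaceTime N k) ≠ 0 := by
    rw [det_dilation]
    positivity
  have : (volume : Measure (Euc N × Euc k)).IsAddHaarMeasure :=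
    Measure.prod.instIsAddHaarMeasure _ _
  have : (volume : Measure (SpaceTime N k)).IsAddHaarMeasure :=
    Measure.prod.instIsAddHaarMeasure _ _
  rw [Measure.addHaar_preimage_continuousLinearMap _ hdet, det_dilation,
    abs_of_pos (by positivity)]

theorem tendsto_dilation_zero (q : SpaceTime N k) :
    Tendsto (fun r => dilation N k r q) (nhds 0) (nhds 0) := by
  have hcont : Continuous fun r => dilation N k r q := by
    simp only [dilation_apply, spaceDilation_apply]
    fun_prop
  have hzero : dilation N k 0 q = 0 := by simp [dilation_apply, spaceDilation_apply]
  exact hzero ▸ hcont.tendsto 0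

theorem hasCompactSupport_comp_dilation (hφ : HasCompactSupport φ) (hr : r ≠ 0) :
    HasCompactSupport fun q => φ (dilation N k r q) := by
  have hinj : Function.Injective (dilation N k r) := by
    intro q₁ q₂ h
    simpa [dilation_apply, spaceDilation_apply, Prod.ext_iff, hr] using h
  exact hφ.comp_isClosedEmbedding
    (LinearMap.isClosedEmbedding_of_injective (LinearMap.ker_eq_bot.mpr hinj))

theorem tsupport_comp_dilation_subset (φ : SpaceTime N k → ℝ) (r : ℝ) :
    tsupport (fun q => φ (dilation N k r q)) ⊆ dilation N k r ⁻¹' tsupport φ :=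
  tsupport_comp_subset_preimage φ (dilation N k r).continuous

end Dilation

section Cutoff

variable {N k : ℕ} {p C r : ℝ} {φ : SpaceTime N k → ℝ}

/-- A `C²` cutoff around the origin of space-time for which `|(Δ_G + ∂_t) φ| ≤ C φ^{1/p}`. The
power of `φ` on the right is what allows `u (Δ_G + ∂_t) φ` to be absorbed by `u^p φ`. -/
structure IsCutoff (p C : ℝ) (φ : SpaceTime N k → ℝ) : Prop where
  contDiff : ContDiff ℝ 2 φ
  hasCompactSupport : HasCompactSupport φ
  nonneg : ∀ q, 0 ≤ φ q
  le_one : ∀ q, φ q ≤ 1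
  eventuallyEq_one : φ =ᶠ[nhds 0] fun _ => 1
  abs_heatAdjoint_le : ∀ q, |heatAdjoint φ q| ≤ C * φ q ^ p⁻¹

theorem exists_isCutoff (N k : ℕ) (hp : 1 < p) :
    ∃ (C : ℝ) (φ : SpaceTime N k → ℝ), 0 ≤ C ∧ IsCutoff p C φ := by
  let g : ContDiffBump (0 : SpaceTime N k) := ⟨1, 2, one_pos, one_lt_two⟩
  obtain ⟨m, hm⟩ := exists_nat_ge (2 / (p - 1))
  have hmp : ((m + 2 : ℕ) : ℝ) * p⁻¹ ≤ m := by
    rw [div_le_iff₀ (by linarith)] at hm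
    rw [← div_eq_mul_inv, div_le_iff₀ (by linarith)]
    push_cast
    linarith
  obtain ⟨C, hC, hbound⟩ :=
    exists_abs_heatAdjoint_pow_le g.contDiff g.hasCompactSupport (fun q => g.nonneg' q) m
  refine ⟨C, fun q => g q ^ (m + 2), hC, g.contDiff.pow _, ?_, fun q => ?_, fun q => ?_, ?_,
    fun q => (hbound q).trans ?_⟩
  · exact g.hasCompactSupport.comp_left (g := fun s : ℝ => s ^ (m + 2)) (by simp)
  · exact pow_nonneg (g.nonneg' q) _
  · exact pow_le_one₀ (g.nonneg' q) g.le_one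
  · filter_upwards [g.eventuallyEq_one] with q hq
    simp [hq]
  · refine mul_le_mul_of_nonneg_left ?_ hC
    rw [← rpow_natCast, ← rpow_natCast, ← rpow_mul (g.nonneg' q)]
    exact rpow_le_rpow_of_exponent_ge' (g.nonneg' q) g.le_one (by positivity) hmp

theorem IsCutoff.comp_dilation (hφ : IsCutoff p C φ) (hr : r ≠ 0) :
    IsCutoff p (C * r ^ 2) fun q => φ (dilation N k r q) where
  contDiff := hφ.contDiff.comp (dilation N k r).contDiff
  hasCompactSupport := hasCompactSupport_comp_dilation hφ.hasCompactSupport hr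
  nonneg _ := hφ.nonneg _
  le_one _ := hφ.le_one _
  eventuallyEq_one := by
    have h : Tendsto (dilation N k r) (nhds 0) (nhds 0) := by
      simpa using (dilation N k r).continuous.tendsto 0
    exact h.eventually hφ.eventuallyEq_one
  abs_heatAdjoint_le q := by
    rw [heatAdjoint_comp_dilation hφ.contDiff, abs_mul, abs_of_nonneg (sq_nonneg r)]
    calc r ^ 2 * |heatAdjoint φ (dilation N k r q)|
        ≤ r ^ 2 * (C * φ (dilation N k r q) ^ p⁻¹) :=
          mul_le_mul_of_nonneg_left (hφ.abs_heatAdjoint_le _) (sq_nonneg r)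
      _ = C * r ^ 2 * φ (dilation N k r q) ^ p⁻¹ := by ring

theorem IsCutoff.eventually_comp_dilation_eq_one (hφ : IsCutoff p C φ) (q : SpaceTime N k) :
    ∀ᶠ r in nhds 0, φ (dilation N k r q) = 1 :=
  (tendsto_dilation_zero q).eventually hφ.eventuallyEq_one

theorem IsCutoff.eventually_heatAdjoint_comp_dilation_eq_zero (hφ : IsCutoff p C φ)
    (q : SpaceTime N k) :
    ∀ᶠ r in nhds 0, heatAdjoint (fun q => φ (dilation N k r q)) q = 0 := by
  filter_upwards [(tendsto_dilation_zero q).eventually hφ.eventuallyEq_one.eventuallyEq_nhds]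
    with r hr
  rw [heatAdjoint_comp_dilation hφ.contDiff, heatAdjoint_eq_zero_of_eventuallyEq_const hr,
    mul_zero]

theorem IsCutoff.tendsto_integral_mul_comp_dilation (hφ : IsCutoff p C φ) {f : Euc N × Euc k → ℝ}
    (hf : Integrable f) {r : ℕ → ℝ} (hr : Tendsto r atTop (nhds 0)) :
    Tendsto (fun n => ∫ z, f z * φ (dilation N k (r n) (z, 0))) atTop (nhds (∫ z, f z)) := by
  refine tendsto_integral_of_dominated_convergence (fun z => ‖f z‖) (fun n => ?_) hf.norm
    (fun n => .of_forall fun z => ?_) (.of_forall fun z => tendsto_const_nhds.congr' ?_)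
  · have hcont : Continuous fun z => φ (dilation N k (r n) (z, 0)) :=
      hφ.contDiff.continuous.comp (by fun_prop)
    exact hf.aestronglyMeasurable.mul hcont.aestronglyMeasurable
  · rw [norm_mul, norm_of_nonneg (hφ.nonneg _)]
    exact mul_le_of_le_one_right (norm_nonneg _) (hφ.le_one _)
  · filter_upwards [hr.eventually (hφ.eventually_comp_dilation_eq_one (z, 0))] with n hn
    rw [hn, mul_one]

theorem rpow_mul_volume_tsupport_comp_dilation_le {s : ℝ} (hφ : HasCompactSupport φ) (hC : 0 ≤ C)
    (hr : 0 < r) (hr_one : r ≤ 1) (hs : N + 2 * k + 2 ≤ 2 * s) :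
    (C * r ^ 2) ^ s * (volume (tsupport fun q => φ (dilation N k r q))).toReal
      ≤ C ^ s * (volume (tsupport φ)).toReal := by
  have hvol : (volume (tsupport fun q => φ (dilation N k r q))).toReal
      ≤ (r ^ (N + 2 * k + 2))⁻¹ * (volume (tsupport φ)).toReal := by
    have h := ENNReal.toReal_mono
      (ENNReal.mul_ne_top ENNReal.ofReal_ne_top hφ.measure_lt_top.ne)
      ((measure_mono (tsupport_comp_dilation_subset φ r)).trans_eq
        (volume_preimage_dilation hr (tsupport φ)))
    rwa [ENNReal.toReal_mul, ENNReal.toReal_ofReal (by positivity)] at h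
  have hpow : (r ^ 2) ^ s ≤ r ^ (N + 2 * k + 2) := by
    rw [← rpow_natCast, ← rpow_natCast, ← rpow_mul hr.le]
    exact rpow_le_rpow_of_exponent_ge hr hr_one (by push_cast; linarith)
  calc (C * r ^ 2) ^ s * (volume (tsupport fun q => φ (dilation N k r q))).toReal
      = C ^ s * ((r ^ 2) ^ s * (volume (tsupport fun q => φ (dilation N k r q))).toReal) := by
        rw [mul_rpow hC (sq_nonneg r), mul_assoc]
    _ ≤ C ^ s * (r ^ (N + 2 * k + 2)
          * ((r ^ (N + 2 * k + 2))⁻¹ * (volume (tsupport φ)).toReal)) := by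
        gcongr
    _ = C ^ s * (volume (tsupport φ)).toReal := by
        rw [mul_inv_cancel_left₀ (by positivity)]

/-- A smooth nondecreasing function of time vanishing for `t ≤ 1/n` and tending to `1` on
`(0, ∞)` as `n → ∞`, used to keep test functions away from `t = 0`. -/
def timeCutoff (n : ℕ) (t : ℝ) : ℝ := smoothTransition (n * t - 1)

theorem contDiff_timeCutoff (n : ℕ) : ContDiff ℝ 2 (timeCutoff n) :=
  smoothTransition.contDiff.comp (by fun_prop)

theorem timeCutoff_nonneg (n : ℕ) (t : ℝ) : 0 ≤ timeCutoff n t := smoothTransition.nonneg _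

theorem timeCutoff_le_one (n : ℕ) (t : ℝ) : timeCutoff n t ≤ 1 := smoothTransition.le_one _

theorem deriv_timeCutoff_nonneg (n : ℕ) (t : ℝ) : 0 ≤ deriv (timeCutoff n) t :=
  Monotone.deriv_nonneg fun _ _ _ => smoothTransition.monotone (by gcongr)

theorem timeCutoff_eq_zero {n : ℕ} {t : ℝ} (h : n * t ≤ 1) : timeCutoff n t = 0 :=
  smoothTransition.zero_of_nonpos (by linarith)

theorem eventually_timeCutoff_eq_one {t : ℝ} (ht : 0 < t) : ∀ᶠ n in atTop, timeCutoff n t = 1 := by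
  filter_upwards [(tendsto_natCast_atTop_atTop.atTop_mul_const ht).eventually_ge_atTop 2] with n hn
  exact smoothTransition.one_of_one_le (by linarith)

theorem IsCutoff.neg_heatAdjoint_mul_timeCutoff_le (hφ : IsCutoff p C φ) (hp : 1 ≤ p)
    (hC : 0 ≤ C) (n : ℕ) (q : SpaceTime N k) :
    -heatAdjoint (fun q => φ q * timeCutoff n q.2) q ≤ C * (φ q * timeCutoff n q.2) ^ p⁻¹ := by
  have hθ : 0 ≤ timeCutoff n q.2 := timeCutoff_nonneg n q.2
  have hθ_le : timeCutoff n q.2 ≤ timeCutoff n q.2 ^ p⁻¹ :=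
    self_le_rpow_of_le_one hθ (timeCutoff_le_one n q.2) (inv_le_one_of_one_le₀ hp)
  -- Only the term with `deriv (timeCutoff n)` is not bounded uniformly in `n`, but it has a sign.
  have hmono : 0 ≤ φ q * deriv (timeCutoff n) q.2 :=
    mul_nonneg (hφ.nonneg q) (deriv_timeCutoff_nonneg n q.2)
  rw [heatAdjoint_mul_time hφ.contDiff ((contDiff_timeCutoff n).differentiable (by norm_num))]
  calc -(heatAdjoint φ q * timeCutoff n q.2 + φ q * deriv (timeCutoff n) q.2)
      ≤ -heatAdjoint φ q * timeCutoff n q.2 := by linarith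
    _ ≤ C * φ q ^ p⁻¹ * timeCutoff n q.2 ^ p⁻¹ :=
        mul_le_mul ((neg_le_abs _).trans (hφ.abs_heatAdjoint_le q)) hθ_le hθ
          (mul_nonneg hC (rpow_nonneg (hφ.nonneg q) _))
    _ = C * (φ q * timeCutoff n q.2) ^ p⁻¹ := by rw [mul_rpow (hφ.nonneg q) hθ, mul_assoc]

theorem tsupport_mul_timeCutoff_subset_future (φ : SpaceTime N k → ℝ) (n : ℕ) :
    tsupport (fun q => φ q * timeCutoff n q.2) ⊆ future N k := by
  have hclosed : IsClosed {q : SpaceTime N k | 1 ≤ n * q.2} :=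
    isClosed_le continuous_const (by fun_prop)
  have hsupport : Function.support (fun q => φ q * timeCutoff n q.2)
      ⊆ {q : SpaceTime N k | 1 ≤ n * q.2} := fun q hq => by
    by_contra h
    exact hq (mul_eq_zero_of_right _ (timeCutoff_eq_zero (le_of_not_ge h)))
  refine (closure_minimal hsupport hclosed).trans fun q (hq : 1 ≤ n * q.2) => ⟨trivial, ?_⟩
  exact pos_of_mul_pos_right (one_pos.trans_le hq) n.cast_nonneg

end Cutoff

section Solution

variable {N k : ℕ} {p : ℝ} {u₀ : Euc N × Euc k → ℝ} {u ψ : SpaceTime N k → ℝ}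

/-- A nonnegative very weak solution of `u_t - Δ_G u = u^p` on `ℝ^{N+k} × (0, ∞)` with initial
datum `u₀`. All derivatives fall on the test function `ψ`, and the identity is asked for only if
`u^p` is integrable up to `t = 0` on the support of `ψ`, so that none of the integrals takes the
junk value `0`. -/
structure IsNonnegSolution (p : ℝ) (u₀ : Euc N × Euc k → ℝ) (u : SpaceTime N k → ℝ) : Prop where
  nonneg : ∀ q ∈ future N k, 0 ≤ u q
  locallyIntegrableOn_rpow : LocallyIntegrableOn (fun q => u q ^ p) (future N k)
  integral_eq : ∀ ψ : SpaceTime N k → ℝ, ContDiff ℝ 2 ψ → HasCompactSupport ψ →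
    IntegrableOn (fun q => u q ^ p) (tsupport ψ ∩ future N k) →
    (∫ q in future N k, u q ^ p * ψ q) + ∫ z, u₀ z * ψ (z, 0)
      = -∫ q in future N k, u q * heatAdjoint ψ q

theorem integrableOn_inter_future_of_rpow {K : Set (SpaceTime N k)} (hp : 1 ≤ p)
    (hu : ∀ q ∈ future N k, 0 ≤ u q) (hK : IsCompact K)
    (h : IntegrableOn (fun q => u q ^ p) (K ∩ future N k)) : IntegrableOn u (K ∩ future N k) := by
  have : IsFiniteMeasure (volume.restrict (K ∩ future N k)) :=
    isFiniteMeasure_restrict.mpr (measure_ne_top_of_subset Set.inter_subset_left hK.measure_ne_top)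
  refine integrable_of_integrable_rpow hp ?_ h
  exact ae_restrict_of_forall_mem (hK.measurableSet.inter measurableSet_future)
    fun q hq => hu q hq.2

theorem integral_Ioc_integral_eq_integral_future {F : SpaceTime N k → ℝ} {T : ℝ}
    (hF : IntegrableOn F (future N k)) (hFT : ∀ q : SpaceTime N k, T < q.2 → F q = 0) :
    ∫ t in Set.Ioc 0 T, ∫ z, F (z, t) = ∫ q in future N k, F q := by
  have hsubset : Set.univ ×ˢ Set.Ioc 0 T ⊆ future N k :=
    Set.prod_mono_right Set.Ioc_subset_Ioi_self
  have hprod : (volume : Measure (SpaceTime N k)).restrict (Set.univ ×ˢ Set.Ioc 0 T)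
      = volume.prod (volume.restrict (Set.Ioc 0 T)) := by
    rw [Measure.volume_eq_prod, ← Measure.prod_restrict, Measure.restrict_univ]
  have hint : Integrable F (volume.prod (volume.restrict (Set.Ioc 0 T))) :=
    hprod ▸ hF.mono_set hsubset
  rw [← integral_prod_symm F hint, ← hprod]
  refine (setIntegral_eq_of_subset_of_forall_sdiff_eq_zero measurableSet_future hsubset
    fun q hq => hFT q ?_).symm
  by_contra h
  exact hq.2 ⟨trivial, hq.1.2, le_of_not_gt h⟩

theorem absPow_of_nonneg {v : ℝ} (hp : p ≠ 0) (hv : 0 ≤ v) : absPow p v = v ^ p := by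
  rcases hv.eq_or_lt with rfl | hpos
  · simp [absPow, zero_rpow hp]
  · rw [absPow, abs_of_pos hpos, rpow_sub_one hpos.ne', div_mul_cancel₀ _ hpos.ne']

theorem locallyIntegrableOn_future_of_isWeakSolutionHeat {u : Euc N × Euc k → ℝ → ℝ}
    (hu : ∀ T, 0 < T → IsWeakSolutionHeat N k p T u₀ u) :
    LocallyIntegrableOn (fun q : SpaceTime N k => absPow p (u q.1 q.2)) (future N k) := by
  rintro q hq
  have hqt : 0 < q.2 := hq.2
  have hqT : q ∈ Set.univ ×ˢ Set.Ioo 0 (q.2 + 1) := ⟨trivial, hqt, lt_add_one _⟩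
  have h := (hu (q.2 + 1) (by linarith)).1 q hqT
  rw [(isOpen_univ.prod isOpen_Ioo).nhdsWithin_eq hqT] at h
  rwa [isOpen_future.nhdsWithin_eq hq]

theorem exists_time_eventuallyEq_zero (hψ : HasCompactSupport ψ) :
    ∃ T, 0 < T ∧ ∀ q : SpaceTime N k, T ≤ q.2 → ψ =ᶠ[nhds q] fun _ => 0 := by
  obtain ⟨T, hT, hball⟩ := hψ.isBounded.subset_ball_lt 0 0
  refine ⟨T, hT, fun q hq => notMem_tsupport_iff_eventuallyEq.mp fun hmem => ?_⟩
  have hnorm : ‖q‖ < T := mem_ball_zero_iff.mp (hball hmem)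
  exact absurd ((le_abs_self q.2).trans (norm_snd_le q)) (by linarith)

theorem integral_eq_of_isWeakSolutionHeat {u : Euc N × Euc k → ℝ → ℝ} (hp : 1 ≤ p)
    (hu_nonneg : ∀ z t, 0 ≤ t → 0 ≤ u z t) (hu : ∀ T, 0 < T → IsWeakSolutionHeat N k p T u₀ u)
    (hψ : ContDiff ℝ 2 ψ) (hψc : HasCompactSupport ψ)
    (hint : IntegrableOn (fun q => u q.1 q.2 ^ p) (tsupport ψ ∩ future N k)) :
    (∫ q in future N k, u q.1 q.2 ^ p * ψ q) + ∫ z, u₀ z * ψ (z, 0)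
      = -∫ q in future N k, u q.1 q.2 * heatAdjoint ψ q := by
  obtain ⟨T, hT, hzero⟩ := exists_time_eventuallyEq_zero hψc
  have huint : IntegrableOn (fun q : SpaceTime N k => u q.1 q.2) (tsupport ψ ∩ future N k) :=
    integrableOn_inter_future_of_rpow hp (fun q hq => hu_nonneg _ _ (le_of_lt hq.2)) hψc hint
  have hgrushin : IntegrableOn
      (fun q : SpaceTime N k => u q.1 q.2 * grushin (fun z => ψ (z, q.2)) q.1) (future N k) :=
    integrableOn_mul_of_continuous_of_eq_zero measurableSet_future hψc huint
      (continuous_grushin_slice hψ) fun q hq =>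
        grushin_slice_eq_zero_of_eventuallyEq_const (notMem_tsupport_iff_eventuallyEq.mp hq)
  have hderiv : IntegrableOn
      (fun q : SpaceTime N k => u q.1 q.2 * deriv (fun t => ψ (q.1, t)) q.2) (future N k) :=
    integrableOn_mul_of_continuous_of_eq_zero measurableSet_future hψc huint
      (continuous_deriv_slice hψ) fun q hq =>
        deriv_slice_eq_zero_of_eventuallyEq_const (notMem_tsupport_iff_eventuallyEq.mp hq)
  have hpow : IntegrableOn (fun q : SpaceTime N k => u q.1 q.2 ^ p * ψ q) (future N k) :=
    integrableOn_mul_of_hasCompactSupport measurableSet_future hψ.continuous hψc hint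
  have hweak := (hu T hT).2 (fun z t => ψ (z, t)) hψ hψc fun z => (hzero (z, T) le_rfl).eq_of_nhds
  have habsPow : ∫ t in Set.Ioc 0 T, ∫ z, absPow p (u z t) * ψ (z, t)
      = ∫ t in Set.Ioc 0 T, ∫ z, u z t ^ p * ψ (z, t) :=
    setIntegral_congr_fun measurableSet_Ioc fun t ht => by
      simp only [absPow_of_nonneg (by positivity : p ≠ 0) (hu_nonneg _ t ht.1.le)]
  rw [habsPow,
    integral_Ioc_integral_eq_integral_future hpow fun q hq => by
      simp [(hzero q hq.le).eq_of_nhds],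
    integral_Ioc_integral_eq_integral_future hgrushin fun q hq => by
      simp [grushin_slice_eq_zero_of_eventuallyEq_const (hzero q hq.le)],
    integral_Ioc_integral_eq_integral_future hderiv fun q hq => by
      simp [deriv_slice_eq_zero_of_eventuallyEq_const (hzero q hq.le)]] at hweak
  simp only [(hzero (_, T) le_rfl).eq_of_nhds, mul_zero, integral_zero] at hweak
  simp only [heatAdjoint, mul_add]
  rw [integral_add hgrushin hderiv]
  linarith

theorem isNonnegSolution_of_isWeakSolutionHeat {u : Euc N × Euc k → ℝ → ℝ} (hp : 1 ≤ p)
    (hu_nonneg : ∀ z t, 0 ≤ t → 0 ≤ u z t)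
    (hu : ∀ T, 0 < T → IsWeakSolutionHeat N k p T u₀ u) :
    IsNonnegSolution p u₀ fun q => u q.1 q.2 where
  nonneg q hq := hu_nonneg q.1 q.2 (le_of_lt hq.2)
  locallyIntegrableOn_rpow := by
    refine (locallyIntegrableOn_future_of_isWeakSolutionHeat hu).congr ?_
    refine ae_restrict_of_forall_mem measurableSet_future fun q hq => ?_
    exact absPow_of_nonneg (by positivity) (hu_nonneg q.1 q.2 (le_of_lt hq.2))
  integral_eq _ := integral_eq_of_isWeakSolutionHeat hp hu_nonneg hu

end Solution

namespace IsNonnegSolution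

variable {N k : ℕ} {p s A C δ : ℝ} {u₀ : Euc N × Euc k → ℝ} {u φ ψ : SpaceTime N k → ℝ}

theorem neg_mul_heatAdjoint_le (hu : IsNonnegSolution p u₀ u) (hps : p.HolderConjugate s)
    (hψ_nonneg : ∀ q, 0 ≤ ψ q) (hA : 0 ≤ A) (hψA : ∀ q, -heatAdjoint ψ q ≤ A * ψ q ^ p⁻¹)
    (hδ : 0 < δ) {q : SpaceTime N k} (hq : q ∈ future N k) :
    -(u q * heatAdjoint ψ q)
      ≤ δ * {q | heatAdjoint ψ q ≠ 0}.indicator (fun q => u q ^ p * ψ q) q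
        + (tsupport ψ).indicator (fun _ => δ ^ (1 - s) * A ^ s) q := by
  have huq := hu.nonneg q hq
  by_cases hzero : heatAdjoint ψ q = 0
  · rw [Set.indicator_of_notMem (not_not_intro hzero), hzero, mul_zero, neg_zero, mul_zero,
      zero_add]
    exact Set.indicator_nonneg (fun _ _ => by positivity) q
  have hmem : q ∈ tsupport ψ := by
    by_contra h
    exact hzero (heatAdjoint_eq_zero_of_notMem_tsupport h)
  rw [Set.indicator_of_mem (s := {q | heatAdjoint ψ q ≠ 0}) hzero, Set.indicator_of_mem hmem]
  calc -(u q * heatAdjoint ψ q) = u q * -heatAdjoint ψ q := by ring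
    _ ≤ u q * (A * ψ q ^ p⁻¹) := mul_le_mul_of_nonneg_left (hψA q) huq
    _ = u q * ψ q ^ p⁻¹ * A := by ring
    _ ≤ δ * (u q * ψ q ^ p⁻¹) ^ p + δ ^ (1 - s) * A ^ s :=
        mul_le_const_mul_rpow_add_const_mul_rpow hps hδ
          (mul_nonneg huq (rpow_nonneg (hψ_nonneg q) _)) hA
    _ = δ * (u q ^ p * ψ q) + δ ^ (1 - s) * A ^ s := by
        rw [mul_rpow huq (rpow_nonneg (hψ_nonneg q) _), rpow_inv_rpow (hψ_nonneg q) hps.ne_zero]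

theorem integral_rpow_mul_add_integral_le (hu : IsNonnegSolution p u₀ u)
    (hps : p.HolderConjugate s) (hψ : ContDiff ℝ 2 ψ) (hψc : HasCompactSupport ψ)
    (hψ_nonneg : ∀ q, 0 ≤ ψ q) (hA : 0 ≤ A) (hψA : ∀ q, -heatAdjoint ψ q ≤ A * ψ q ^ p⁻¹)
    (hint : IntegrableOn (fun q => u q ^ p) (tsupport ψ ∩ future N k)) (hδ : 0 < δ) :
    (∫ q in future N k, u q ^ p * ψ q) + ∫ z, u₀ z * ψ (z, 0)
      ≤ δ * (∫ q in future N k, {q | heatAdjoint ψ q ≠ 0}.indicator (fun q => u q ^ p * ψ q) q)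
        + δ ^ (1 - s) * A ^ s * (volume (tsupport ψ)).toReal := by
  have hadj : Continuous (heatAdjoint ψ) := continuous_heatAdjoint hψ
  have hu_adj : IntegrableOn (fun q => u q * heatAdjoint ψ q) (future N k) :=
    integrableOn_mul_of_continuous_of_eq_zero measurableSet_future hψc
      (integrableOn_inter_future_of_rpow hps.lt.le hu.nonneg hψc hint) hadj
      fun _ => heatAdjoint_eq_zero_of_notMem_tsupport
  have hindicator : IntegrableOn ({q | heatAdjoint ψ q ≠ 0}.indicator fun q => u q ^ p * ψ q)
      (future N k) :=
    Integrable.indicator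
      (integrableOn_mul_of_hasCompactSupport measurableSet_future hψ.continuous hψc hint)
      (isOpen_ne_fun hadj continuous_const).measurableSet
  have hsupp : Integrable ((tsupport ψ).indicator fun _ => δ ^ (1 - s) * A ^ s) :=
    (integrable_indicator_iff hψc.measurableSet).mpr
      (integrableOn_const hψc.measure_ne_top)
  calc (∫ q in future N k, u q ^ p * ψ q) + ∫ z, u₀ z * ψ (z, 0)
      = ∫ q in future N k, -(u q * heatAdjoint ψ q) := by
        rw [hu.integral_eq ψ hψ hψc hint, integral_neg]
    _ ≤ ∫ q in future N k,
          (δ * {q | heatAdjoint ψ q ≠ 0}.indicator (fun q => u q ^ p * ψ q) q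
            + (tsupport ψ).indicator (fun _ => δ ^ (1 - s) * A ^ s) q) :=
        setIntegral_mono_on hu_adj.neg ((hindicator.const_mul δ).add hsupp.integrableOn)
          measurableSet_future
          fun q hq => hu.neg_mul_heatAdjoint_le hps hψ_nonneg hA hψA hδ hq
    _ = δ * (∫ q in future N k, {q | heatAdjoint ψ q ≠ 0}.indicator (fun q => u q ^ p * ψ q) q)
          + ∫ q in future N k, (tsupport ψ).indicator (fun _ => δ ^ (1 - s) * A ^ s) q := by
        rw [integral_add (hindicator.const_mul δ) hsupp.integrableOn, integral_const_mul]
    _ ≤ _ := by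
        gcongr
        have hnonneg : 0 ≤ (tsupport ψ).indicator fun _ => δ ^ (1 - s) * A ^ s :=
          Set.indicator_nonneg fun _ _ => by positivity
        refine (setIntegral_le_integral hsupp (.of_forall hnonneg)).trans_eq ?_
        rw [integral_indicator_const _ hψc.measurableSet, smul_eq_mul, mul_comm, measureReal_def]

theorem integrableOn_rpow_tsupport_mul_timeCutoff (hu : IsNonnegSolution p u₀ u)
    (hφ : HasCompactSupport φ) (n : ℕ) :
    IntegrableOn (fun q => u q ^ p) (tsupport (fun q => φ q * timeCutoff n q.2) ∩ future N k) :=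
  (hu.locallyIntegrableOn_rpow.integrableOn_compact_subset
    (tsupport_mul_timeCutoff_subset_future φ n) hφ.mul_right).mono_set Set.inter_subset_left

theorem integrableOn_rpow_mul_timeCutoff (hu : IsNonnegSolution p u₀ u) (hφ : Continuous φ)
    (hφc : HasCompactSupport φ) (n : ℕ) :
    IntegrableOn (fun q => u q ^ p * (φ q * timeCutoff n q.2)) (future N k) :=
  integrableOn_mul_of_hasCompactSupport measurableSet_future
    (hφ.mul ((contDiff_timeCutoff n).continuous.comp continuous_snd)) hφc.mul_right
    (hu.integrableOn_rpow_tsupport_mul_timeCutoff hφc n)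

theorem integral_rpow_mul_timeCutoff_le (hu : IsNonnegSolution p u₀ u)
    (hps : p.HolderConjugate s) (hφ : IsCutoff p C φ) (hC : 0 ≤ C) (n : ℕ) :
    ∫ q in future N k, u q ^ p * (φ q * timeCutoff n q.2)
      ≤ 2 * ((1 / 2) ^ (1 - s) * (C ^ s * (volume (tsupport φ)).toReal)) := by
  set ψ : SpaceTime N k → ℝ := fun q => φ q * timeCutoff n q.2
  have hψ : ContDiff ℝ 2 ψ := hφ.contDiff.mul ((contDiff_timeCutoff n).comp contDiff_snd)
  have hψ_nonneg (q : SpaceTime N k) : 0 ≤ ψ q := mul_nonneg (hφ.nonneg q) (timeCutoff_nonneg n _)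
  -- With `δ = 1 / 2` the first term on the right is absorbed by the left-hand side.
  have hest := hu.integral_rpow_mul_add_integral_le hps hψ hφ.hasCompactSupport.mul_right
    hψ_nonneg hC (hφ.neg_heatAdjoint_mul_timeCutoff_le hps.lt.le hC n)
    (hu.integrableOn_rpow_tsupport_mul_timeCutoff hφ.hasCompactSupport n) one_half_pos
  have hinitial : ∫ z, u₀ z * ψ (z, 0) = 0 := by
    simp [ψ, timeCutoff_eq_zero]
  have hindicator : ∫ q in future N k,
      {q | heatAdjoint ψ q ≠ 0}.indicator (fun q => u q ^ p * ψ q) q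
        ≤ ∫ q in future N k, u q ^ p * ψ q := by
    rw [setIntegral_indicator (isOpen_ne_fun (continuous_heatAdjoint hψ)
      continuous_const).measurableSet]
    refine setIntegral_mono_set
      (hu.integrableOn_rpow_mul_timeCutoff hφ.contDiff.continuous hφ.hasCompactSupport n)
      (ae_restrict_of_forall_mem measurableSet_future fun q hq => ?_)
      Set.inter_subset_left.eventuallyLE
    exact mul_nonneg (rpow_nonneg (hu.nonneg q hq) p) (hψ_nonneg q)
  have hvol : (1 / 2) ^ (1 - s) * C ^ s * (volume (tsupport ψ)).toReal
      ≤ (1 / 2) ^ (1 - s) * (C ^ s * (volume (tsupport φ)).toReal) := by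
    rw [← mul_assoc]
    gcongr
    · exact hφ.hasCompactSupport.measure_ne_top
    · exact tsupport_mul_subset_left
  linarith

theorem integrableOn_rpow (hu : IsNonnegSolution p u₀ u) (hps : p.HolderConjugate s)
    (hs : N + 2 * k + 2 ≤ 2 * s) : IntegrableOn (fun q => u q ^ p) (future N k) := by
  obtain ⟨C, φ, hC, hφ⟩ := exists_isCutoff N k hps.lt
  let r (n : ℕ) : ℝ := 1 / (n + 1)
  have hr (n : ℕ) : 0 < r n := Nat.one_div_pos_of_nat
  have hr_one (n : ℕ) : r n ≤ 1 := div_le_one_of_le₀ (by simp) (by positivity)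
  have hcutoff (n : ℕ) := hφ.comp_dilation (hr n).ne'
  refine integrable_of_tendsto_of_integral_le
    (f := fun n q => u q ^ p * (φ (dilation N k (r n) q) * timeCutoff n q.2))
    (M := 2 * ((1 / 2) ^ (1 - s) * (C ^ s * (volume (tsupport φ)).toReal)))
    (fun n => ?_) (fun n => ?_) (fun n => ?_) ?_
  · exact hu.integrableOn_rpow_mul_timeCutoff (hcutoff n).contDiff.continuous
      (hcutoff n).hasCompactSupport n
  · exact ae_restrict_of_forall_mem measurableSet_future fun q hq =>
      mul_nonneg (rpow_nonneg (hu.nonneg q hq) p)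
        (mul_nonneg (hφ.nonneg _) (timeCutoff_nonneg n _))
  · refine (hu.integral_rpow_mul_timeCutoff_le hps (hcutoff n) (by positivity) n).trans ?_
    gcongr 2 * (_ * ?_)
    exact rpow_mul_volume_tsupport_comp_dilation_le hφ.hasCompactSupport hC (hr n)
      (hr_one n) hs
  · refine ae_restrict_of_forall_mem measurableSet_future fun q hq => ?_
    refine tendsto_const_nhds.congr' ?_
    filter_upwards [eventually_timeCutoff_eq_one hq.2,
      tendsto_one_div_add_atTop_nhds_zero_nat.eventually (hφ.eventually_comp_dilation_eq_one q)]
      with n hθ hφ1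
    rw [hθ, hφ1, mul_one, mul_one]

theorem integral_initial_mul_cutoff_le (hu : IsNonnegSolution p u₀ u) (hps : p.HolderConjugate s)
    (hup : IntegrableOn (fun q => u q ^ p) (future N k)) (hφ : IsCutoff p C φ) (hC : 0 ≤ C)
    (hδ : 0 < δ) :
    ∫ z, u₀ z * φ (z, 0)
      ≤ δ * (∫ q in future N k, {q | heatAdjoint φ q ≠ 0}.indicator (fun q => u q ^ p * φ q) q)
        + δ ^ (1 - s) * (C ^ s * (volume (tsupport φ)).toReal) := by
  have hest := hu.integral_rpow_mul_add_integral_le hps hφ.contDiff hφ.hasCompactSupport hφ.nonneg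
    hC (fun q => (neg_le_abs _).trans (hφ.abs_heatAdjoint_le q))
    (hup.mono_set Set.inter_subset_right) hδ
  have hnonneg : 0 ≤ ∫ q in future N k, u q ^ p * φ q :=
    setIntegral_nonneg measurableSet_future fun q hq =>
      mul_nonneg (rpow_nonneg (hu.nonneg q hq) p) (hφ.nonneg q)
  rw [mul_assoc] at hest
  linarith

theorem tendsto_integral_indicator_heatAdjoint_comp_dilation (hu : IsNonnegSolution p u₀ u)
    (hup : IntegrableOn (fun q => u q ^ p) (future N k)) (hφ : IsCutoff p C φ) {r : ℕ → ℝ}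
    (hr : Tendsto r atTop (nhds 0)) :
    Tendsto (fun n => ∫ q in future N k,
      {q | heatAdjoint (fun q => φ (dilation N k (r n) q)) q ≠ 0}.indicator
        (fun q => u q ^ p * φ (dilation N k (r n) q)) q) atTop (nhds 0) := by
  have hcontDiff (n : ℕ) : ContDiff ℝ 2 fun q => φ (dilation N k (r n) q) :=
    hφ.contDiff.comp (dilation N k (r n)).contDiff
  have hzero : nhds (0 : ℝ) = nhds (∫ _ in future N k, (0 : ℝ)) := by rw [integral_zero]
  rw [hzero]
  refine tendsto_integral_of_dominated_convergence (fun q => u q ^ p) (fun n => ?_) hup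
    (fun n => ?_) (.of_forall fun q => ?_)
  · exact (hup.aestronglyMeasurable.mul (hcontDiff n).continuous.aestronglyMeasurable).indicator
      (isOpen_ne_fun (continuous_heatAdjoint (hcontDiff n)) continuous_const).measurableSet
  · refine ae_restrict_of_forall_mem measurableSet_future fun q hq => ?_
    have hpow : 0 ≤ u q ^ p := rpow_nonneg (hu.nonneg q hq) p
    refine (norm_indicator_le_norm_self _ _).trans ?_
    rw [norm_of_nonneg (mul_nonneg hpow (hφ.nonneg _))]
    exact mul_le_of_le_one_right hpow (hφ.le_one _)
  · refine tendsto_const_nhds.congr' ?_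
    filter_upwards [hr.eventually (hφ.eventually_heatAdjoint_comp_dilation_eq_zero q)] with n hn
    rw [Set.indicator_of_notMem (not_not_intro hn)]

theorem integral_initial_le (hu : IsNonnegSolution p u₀ u) (hu₀ : Integrable u₀)
    (hps : p.HolderConjugate s) (hs : N + 2 * k + 2 ≤ 2 * s) (hφ : IsCutoff p C φ) (hC : 0 ≤ C)
    (hδ : 0 < δ) :
    ∫ z, u₀ z ≤ δ ^ (1 - s) * (C ^ s * (volume (tsupport φ)).toReal) := by
  have hup := hu.integrableOn_rpow hps hs
  let r (n : ℕ) : ℝ := 1 / (n + 1)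
  have hr (n : ℕ) : 0 < r n := Nat.one_div_pos_of_nat
  have hr_one (n : ℕ) : r n ≤ 1 := div_le_one_of_le₀ (by simp) (by positivity)
  have hr_lim : Tendsto r atTop (nhds 0) := tendsto_one_div_add_atTop_nhds_zero_nat
  have hest (n : ℕ) : ∫ z, u₀ z * φ (dilation N k (r n) (z, 0))
      ≤ δ * (∫ q in future N k,
          {q | heatAdjoint (fun q => φ (dilation N k (r n) q)) q ≠ 0}.indicator
            (fun q => u q ^ p * φ (dilation N k (r n) q)) q)
        + δ ^ (1 - s) * (C ^ s * (volume (tsupport φ)).toReal) := by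
    refine (hu.integral_initial_mul_cutoff_le hps hup (hφ.comp_dilation (hr n).ne')
      (by positivity) hδ).trans ?_
    gcongr _ + _ * ?_
    exact rpow_mul_volume_tsupport_comp_dilation_le hφ.hasCompactSupport hC (hr n)
      (hr_one n) hs
  refine le_of_tendsto_of_tendsto' (hφ.tendsto_integral_mul_comp_dilation hu₀ hr_lim) ?_ hest
  have hlim := hu.tendsto_integral_indicator_heatAdjoint_comp_dilation hup hφ hr_lim
  simpa using (hlim.const_mul δ).add_const (δ ^ (1 - s) * (C ^ s * (volume (tsupport φ)).toReal))

theorem integral_initial_nonpos (hu : IsNonnegSolution p u₀ u) (hu₀ : Integrable u₀)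
    (hps : p.HolderConjugate s) (hs : N + 2 * k + 2 ≤ 2 * s) : ∫ z, u₀ z ≤ 0 := by
  obtain ⟨C, φ, hC, hφ⟩ := exists_isCutoff N k hps.lt
  have hlim : Tendsto (fun δ : ℝ => δ ^ (1 - s) * (C ^ s * (volume (tsupport φ)).toReal))
      atTop (nhds 0) := by
    simpa using (tendsto_rpow_neg_atTop (sub_pos.mpr hps.symm.lt)).mul_const
      (C ^ s * (volume (tsupport φ)).toReal)
  refine ge_of_tendsto hlim ?_
  filter_upwards [eventually_gt_atTop 0] with δ hδ
  exact hu.integral_initial_le hu₀ hps hs hφ hC hδ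

end IsNonnegSolution

theorem le_two_mul_conjExponent {p d : ℝ} (hp : 1 < p) (hd : 0 < d) (hpd : p ≤ 1 + 2 / d) :
    d + 2 ≤ 2 * p.conjExponent := by
  have hsub : 0 < p - 1 := by linarith
  have hmul : (p - 1) * d ≤ 2 := (le_div_iff₀ hd).mp (by linarith)
  rw [Real.conjExponent, ← mul_div_assoc, le_div_iff₀ hsub]
  linarith

/-- **Theorem 1 (Fujita-type nonexistence for the Grushin heat equation).**
If `1 < p ≤ 1 + 2/(N+2k)` and `u0 ∈ L¹` with `∫ u0 > 0`, then there is no global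
nonnegative weak solution of `u_t − Δ_G u = |u|^{p−1}u`, `u(·,0) = u0`. -/
theorem no_global_weak_solution_heat (N k : ℕ) (hN : 1 ≤ N) (hk : 1 ≤ k)
    (p : ℝ) (hp : 1 < p) (hpc : p ≤ 1 + 2 / ((N : ℝ) + 2 * k))
    (u0 : Euc N × Euc k → ℝ) (hu0 : Integrable u0)
    (hu0pos : 0 < ∫ z, u0 z) :
    ¬ ∃ u : Euc N × Euc k → ℝ → ℝ,
        (∀ z : Euc N × Euc k, ∀ t : ℝ, 0 ≤ t → 0 ≤ u z t) ∧
        (∀ T : ℝ, 0 < T → IsWeakSolutionHeat N k p T u0 u) := by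
  rintro ⟨u, hu_nonneg, hu⟩
  have hexp : (N : ℝ) + 2 * k + 2 ≤ 2 * p.conjExponent :=
    le_two_mul_conjExponent hp (by positivity) hpc
  exact hu0pos.not_ge <| (isNonnegSolution_of_isWeakSolutionHeat hp.le hu_nonneg hu)
    |>.integral_initial_nonpos hu0 (.conjExponent hp) hexp
end
end

section
/- Let T > 0, 0 < γ < 1, p > 1, a > 0, b > 0. There exists a constant K = K(a,b,p) such that: if w ∈ C¹([0,T]) satisfies w > 0 on [0,T] and w'(t) + a·w(t) ≥ b·∫_0^t (t−s)^{−γ} w(s)^p ds for all t ∈ [0,T], and if T ≥ 1, then w(0) < K. Moreover, K does not depend on T or γ. -/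
open MeasureTheory Real Filter
open scoped ENNReal NNReal

noncomputable section

/-!
Only the interval `[0, 1]` matters, since there `(t - s) ^ (-γ) ≥ 1` and the hypothesis gives
`w' + a w ≥ b F` with `F t = ∫₀ᵗ w ^ p`. The argument works on any `[0, T]`: put `u = T - t`,
multiply by `u ^ ℓ` and integrate by parts. The derivative of
`u ^ ℓ w + b / (ℓ + 1) u ^ (ℓ + 1) F` is at least
`b / (ℓ + 1) u ^ (ℓ + 1) w ^ p - (ℓ + |a| T) u ^ (ℓ - 1) w`.
For `ℓ = (p + 1) / (p - 1)` this is `B x ^ p - A x` with `x = u ^ (ℓ - 1) w`, which is bounded below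
because `p > 1`. Since the functional vanishes at `T`, its initial value `T ^ ℓ w 0` is bounded.
-/

lemma exists_forall_mul_le_mul_rpow_add {A B p : ℝ} (hA : 0 ≤ A) (hB : 0 < B) (hp : 1 < p) :
    ∃ D, ∀ x, 0 ≤ x → A * x ≤ B * x ^ p + D := by
  have hp' : 0 < p - 1 := sub_pos.2 hp
  set M := (A / B) ^ (p - 1)⁻¹
  have hM : 0 ≤ M := by positivity
  refine ⟨A * M, fun x hx => ?_⟩
  rcases le_total x M with hxM | hMx
  · have : A * x ≤ A * M := by gcongr
    have : 0 ≤ B * x ^ p := by positivity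
    linarith
  · have hAx : A ≤ B * x ^ (p - 1) := by
      rw [← div_le_iff₀' hB]
      calc A / B = M ^ (p - 1) := (rpow_inv_rpow (by positivity) hp'.ne').symm
        _ ≤ x ^ (p - 1) := by gcongr
    calc A * x ≤ B * x ^ (p - 1) * x := by gcongr
      _ = B * x ^ p := by rw [mul_assoc, ← rpow_add_one' hx (by linarith), sub_add_cancel]
      _ ≤ B * x ^ p + A * M := le_add_of_nonneg_right (mul_nonneg hA hM)

lemma hasDerivAt_const_sub_rpow {T t : ℝ} (ht : t < T) (r : ℝ) :
    HasDerivAt (fun s => (T - s) ^ r) (-(r * (T - t) ^ (r - 1))) t :=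
  (((hasDerivAt_id' t).const_sub T).rpow_const (Or.inl (sub_pos.2 ht).ne')).congr_deriv (by ring)

/-- The functional obtained by testing `w' + a w ≥ b F`, where `F' ≥ w ^ p`, against
`(T - t) ^ ℓ`. The coefficient of `F` is `b` times an antiderivative of `-(T - t) ^ ℓ`, so that
the two terms in `b F` cancel in its derivative. -/
def testedFunctional (b ℓ T : ℝ) (w F : ℝ → ℝ) (t : ℝ) : ℝ :=
  (T - t) ^ ℓ * w t + b / (ℓ + 1) * (T - t) ^ (ℓ + 1) * F t

section DifferentialInequalities

variable {a b ℓ p t D T dw dF : ℝ} {w w' F F' : ℝ → ℝ}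

lemma hasDerivAt_testedFunctional (hℓ : ℓ + 1 ≠ 0) (ht : t < T)
    (hw : HasDerivAt w dw t) (hF : HasDerivAt F dF t) :
    HasDerivAt (testedFunctional b ℓ T w F)
      ((T - t) ^ ℓ * (dw - b * F t) + b / (ℓ + 1) * (T - t) ^ (ℓ + 1) * dF
        - ℓ * (T - t) ^ (ℓ - 1) * w t) t := by
  refine (((hasDerivAt_const_sub_rpow ht ℓ).mul hw).add
    (((hasDerivAt_const_sub_rpow ht (ℓ + 1)).const_mul (b / (ℓ + 1))).mul hF)).congr_deriv ?_
  rw [add_sub_cancel_right]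
  field_simp
  ring

lemma continuousOn_testedFunctional {s : Set ℝ} (hℓ : 0 ≤ ℓ) (hw : ContinuousOn w s)
    (hF : ContinuousOn F s) : ContinuousOn (testedFunctional b ℓ T w F) s := by
  have hpow {r : ℝ} (hr : 0 ≤ r) : ContinuousOn (fun t => (T - t) ^ r) s :=
    (continuousOn_const.sub continuousOn_id).rpow_const fun _ _ => Or.inr hr
  exact ((hpow hℓ).mul hw).add ((continuousOn_const.mul (hpow (by linarith))).mul hF)

lemma neg_le_deriv_testedFunctional (hb : 0 ≤ b) (hℓ : 0 ≤ ℓ) (hℓp : (ℓ - 1) * p = ℓ + 1)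
    (hD : ∀ x, 0 ≤ x → (ℓ + |a| * T) * x ≤ b / (ℓ + 1) * x ^ p + D) (ht : t ∈ Set.Ioo 0 T)
    (hw' : HasDerivAt w dw t) (hF' : HasDerivAt F dF t) (hw0 : 0 ≤ w t)
    (hw : b * F t ≤ dw + a * w t) (hF : w t ^ p ≤ dF) :
    -D ≤ deriv (testedFunctional b ℓ T w F) t := by
  rw [(hasDerivAt_testedFunctional (by linarith) ht.2 hw' hF').deriv]
  have hu : 0 < T - t := sub_pos.2 ht.2
  have huT : T - t ≤ T := sub_le_self T ht.1.le
  set u := T - t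
  set x := u ^ (ℓ - 1) * w t with hx_def
  have hx : 0 ≤ x := by positivity
  have hxp : x ^ p = u ^ (ℓ + 1) * w t ^ p := by
    rw [hx_def, mul_rpow (by positivity) hw0, ← rpow_mul hu.le, hℓp]
  have hdamping : -(|a| * T * x) ≤ u ^ ℓ * (dw - b * F t) :=
    calc -(|a| * T * x) ≤ -(a * u * x) := by
          gcongr
          exact le_abs_self a
      _ = u ^ ℓ * (-(a * w t)) := by
          rw [hx_def, rpow_sub_one hu.ne']
          field_simp
      _ ≤ u ^ ℓ * (dw - b * F t) := by
          gcongr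
          linarith
  have hsource : b / (ℓ + 1) * x ^ p ≤ b / (ℓ + 1) * u ^ (ℓ + 1) * dF := by
    rw [hxp, ← mul_assoc]
    gcongr
  linarith [hD x hx, mul_assoc ℓ (u ^ (ℓ - 1)) (w t)]

lemma rpow_mul_initial_le (hT : 0 < T) (hb : 0 ≤ b) (hℓ : 0 < ℓ) (hℓp : (ℓ - 1) * p = ℓ + 1)
    (hD : ∀ x, 0 ≤ x → (ℓ + |a| * T) * x ≤ b / (ℓ + 1) * x ^ p + D)
    (hwc : ContinuousOn w (Set.Icc 0 T)) (hFc : ContinuousOn F (Set.Icc 0 T))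
    (hw' : ∀ t ∈ Set.Ioo 0 T, HasDerivAt w (w' t) t)
    (hF' : ∀ t ∈ Set.Ioo 0 T, HasDerivAt F (F' t) t)
    (hw0 : ∀ t ∈ Set.Ioo 0 T, 0 ≤ w t) (hF0 : 0 ≤ F 0)
    (hw : ∀ t ∈ Set.Ioo 0 T, b * F t ≤ w' t + a * w t)
    (hF : ∀ t ∈ Set.Ioo 0 T, w t ^ p ≤ F' t) :
    T ^ ℓ * w 0 ≤ D * T := by
  set G := testedFunctional b ℓ T w F with hG
  have hgrowth : -D * (T - 0) ≤ G T - G 0 := by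
    refine (convex_Icc 0 T).mul_sub_le_image_sub_of_le_deriv
      (continuousOn_testedFunctional hℓ.le hwc hFc) ?_ ?_ 0 (Set.left_mem_Icc.2 hT.le) T
      (Set.right_mem_Icc.2 hT.le) hT.le <;> rw [interior_Icc] <;> intro t ht
    · exact (hasDerivAt_testedFunctional (by linarith) ht.2 (hw' t ht)
        (hF' t ht)).differentiableAt.differentiableWithinAt
    · exact neg_le_deriv_testedFunctional hb hℓ.le hℓp hD ht (hw' t ht) (hF' t ht)
        (hw0 t ht) (hw t ht) (hF t ht)
  have hG_end : G T = 0 := by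
    simp [hG, testedFunctional, zero_rpow hℓ.ne', zero_rpow (by linarith : ℓ + 1 ≠ 0)]
  have hG_start : T ^ ℓ * w 0 ≤ G 0 := by
    simp only [hG, testedFunctional, sub_zero]
    exact le_add_of_nonneg_right (by positivity)
  linarith

end DifferentialInequalities

theorem exists_bound_of_differential_inequalities {b p T : ℝ} (a : ℝ) (hb : 0 < b) (hp : 1 < p)
    (hT : 0 < T) :
    ∃ K, ∀ w w' F F' : ℝ → ℝ,
      ContinuousOn w (Set.Icc 0 T) → ContinuousOn F (Set.Icc 0 T) →
      (∀ t ∈ Set.Ioo 0 T, HasDerivAt w (w' t) t) →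
      (∀ t ∈ Set.Ioo 0 T, HasDerivAt F (F' t) t) →
      (∀ t ∈ Set.Ioo 0 T, 0 ≤ w t) → 0 ≤ F 0 →
      (∀ t ∈ Set.Ioo 0 T, b * F t ≤ w' t + a * w t) →
      (∀ t ∈ Set.Ioo 0 T, w t ^ p ≤ F' t) → w 0 < K := by
  have hp' : 0 < p - 1 := sub_pos.2 hp
  set ℓ := (p + 1) / (p - 1) with hℓ_def
  have hℓ : 0 < ℓ := by positivity
  have hℓp : (ℓ - 1) * p = ℓ + 1 := by
    rw [hℓ_def]
    field_simp
    ring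
  obtain ⟨D, hD⟩ := exists_forall_mul_le_mul_rpow_add (A := ℓ + |a| * T) (B := b / (ℓ + 1))
    (by positivity) (by positivity) hp
  refine ⟨D * T / T ^ ℓ + 1, fun w w' F F' hwc hFc hw' hF' hw0 hF0 hw hF => ?_⟩
  refine lt_add_of_le_of_pos ?_ one_pos
  rw [le_div_iff₀' (by positivity)]
  exact rpow_mul_initial_le hT hb.le hℓ hℓp hD hwc hFc hw' hF' hw0 hF0 hw hF

lemma hasDerivAt_integral_of_continuousOn_Icc {E : Type*} [NormedAddCommGroup E] [NormedSpace ℝ E]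
    [CompleteSpace E] {f : ℝ → E} {x y t : ℝ} (hf : ContinuousOn f (Set.Icc x y))
    (ht : t ∈ Set.Ioo x y) :
    HasDerivAt (fun r => ∫ s in x..r, f s) (f t) t := by
  have hxt : Set.uIcc x t ⊆ Set.Icc x y := by
    rw [Set.uIcc_of_le ht.1.le]
    exact Set.Icc_subset_Icc_right ht.2.le
  exact intervalIntegral.integral_hasDerivAt_right (hf.mono hxt).intervalIntegrable
    ((hf.mono Set.Ioo_subset_Icc_self).stronglyMeasurableAtFilter isOpen_Ioo t ht)
    (hf.continuousAt (Icc_mem_nhds ht.1 ht.2))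

lemma mul_integral_le_integral_convolution {k f : ℝ → ℝ} {κ t : ℝ} (ht : 0 ≤ t)
    (hk : IntervalIntegrable k volume 0 t) (hκ : ∀ s ∈ Set.Ioo 0 t, κ ≤ k s)
    (hf : ContinuousOn f (Set.Icc 0 t)) (hf0 : ∀ s ∈ Set.Ioo 0 t, 0 ≤ f s) :
    κ * ∫ s in 0..t, f s ≤ ∫ s in 0..t, k (t - s) * f s := by
  rw [← Set.uIcc_of_le ht] at hf
  have hk_refl : IntervalIntegrable (fun s => k (t - s)) volume 0 t := by
    simpa using (hk.comp_sub_left t).symm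
  rw [← intervalIntegral.integral_const_mul]
  refine intervalIntegral.integral_mono_on_of_le_Ioo ht (hf.intervalIntegrable.const_mul κ)
    (hk_refl.mul_continuousOn hf) fun s hs => ?_
  exact mul_le_mul_of_nonneg_right (hκ _ ⟨sub_pos.2 hs.2, sub_lt_self t hs.1⟩) (hf0 s hs)

theorem integro_differential_bound_general {b p τ : ℝ} (a : ℝ) (hb : 0 < b) (hp : 1 < p)
    (hτ : 0 < τ) :
    ∃ K : ℝ, ∀ (T : ℝ) (k w w' : ℝ → ℝ),
      τ ≤ T → IntervalIntegrable k volume 0 T → (∀ s ∈ Set.Ioo 0 τ, 1 ≤ k s) →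
      (∀ t ∈ Set.Icc 0 T, HasDerivWithinAt w (w' t) (Set.Icc 0 T) t) →
      (∀ t ∈ Set.Icc 0 T, 0 ≤ w t) →
      (∀ t ∈ Set.Icc 0 T,
        b * ∫ s in Set.Ioc 0 t, k (t - s) * w s ^ p ≤ w' t + a * w t) →
      w 0 < K := by
  obtain ⟨K, hK⟩ := exists_bound_of_differential_inequalities a hb hp hτ
  refine ⟨K, fun T k w w' hτT hk hk1 hder hw0 hineq => ?_⟩
  have hsub : Set.Icc 0 τ ⊆ Set.Icc 0 T := Set.Icc_subset_Icc_right hτT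
  have hwc : ContinuousOn w (Set.Icc 0 τ) := fun t ht =>
    (hder t (hsub ht)).continuousWithinAt.mono hsub
  have hwp : ContinuousOn (fun s => w s ^ p) (Set.Icc 0 τ) :=
    hwc.rpow_const fun _ _ => Or.inr (by linarith)
  have hFc : ContinuousOn (fun t => ∫ s in 0..t, w s ^ p) (Set.Icc 0 τ) := by
    rw [← Set.uIcc_of_le hτ.le] at hwp ⊢
    exact intervalIntegral.continuousOn_primitive_interval' hwp.intervalIntegrable
      Set.left_mem_uIcc
  have hw' (t : ℝ) (ht : t ∈ Set.Ioo 0 τ) : HasDerivAt w (w' t) t :=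
    (hder t (hsub (Set.Ioo_subset_Icc_self ht))).hasDerivAt
      (Icc_mem_nhds ht.1 (ht.2.trans_le hτT))
  refine hK w w' _ _ hwc hFc hw' (fun t => hasDerivAt_integral_of_continuousOn_Icc hwp)
    (fun t ht => hw0 t (hsub (Set.Ioo_subset_Icc_self ht))) (by simp) (fun t ht => ?_)
    (fun _ _ => le_rfl)
  have htT : t ≤ T := ht.2.le.trans hτT
  have hkt : IntervalIntegrable k volume 0 t :=
    hk.mono_set (Set.uIcc_subset_uIcc_left (Set.mem_uIcc_of_le ht.1.le htT))
  have hconv := mul_integral_le_integral_convolution ht.1.le hkt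
    (fun s hs => hk1 s ⟨hs.1, hs.2.trans ht.2⟩) (hwp.mono (Set.Icc_subset_Icc_right ht.2.le))
    (fun s hs => rpow_nonneg (hw0 s ⟨hs.1.le, hs.2.le.trans htT⟩) p)
  calc b * ∫ s in 0..t, w s ^ p ≤ b * ∫ s in 0..t, k (t - s) * w s ^ p := by
        rw [one_mul] at hconv
        gcongr
    _ = b * ∫ s in Set.Ioc 0 t, k (t - s) * w s ^ p := by
        rw [intervalIntegral.integral_of_le ht.1.le]
    _ ≤ w' t + a * w t := hineq t ⟨ht.1.le, htT⟩

/-- **Lemma (Cazenave–Dickstein–Weissler, part (i)).**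
For `a, b > 0` and `p > 1` there is a constant `K = K(a,b,p)` (independent of `T` and `γ`)
such that: whenever `0 < γ < 1`, `T ≥ 1`, and `w ∈ C¹([0,T])` is positive and satisfies
`w'(t) + a w(t) ≥ b ∫_0^t (t−s)^{−γ} w(s)^p ds` on `[0,T]`, then `w(0) < K`. -/
theorem integro_differential_bound (a b p : ℝ) (ha : 0 < a) (hb : 0 < b) (hp : 1 < p) :
    ∃ K : ℝ, ∀ (T γ : ℝ) (w w' : ℝ → ℝ),
      0 < T → 0 < γ → γ < 1 →
      (∀ t ∈ Set.Icc (0 : ℝ) T, HasDerivWithinAt w (w' t) (Set.Icc 0 T) t) →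
      ContinuousOn w' (Set.Icc 0 T) →
      (∀ t ∈ Set.Icc (0 : ℝ) T, 0 < w t) →
      (∀ t ∈ Set.Icc (0 : ℝ) T,
        b * ∫ s in Set.Ioc (0 : ℝ) t, (t - s) ^ (-γ) * w s ^ p ≤ w' t + a * w t) →
      1 ≤ T → w 0 < K := by
  obtain ⟨K, hK⟩ := integro_differential_bound_general a hb hp one_pos
  exact ⟨K, fun T γ w w' _ hγ0 hγ1 hder _ hpos hineq hT1 => hK T (fun s => s ^ (-γ)) w w' hT1
    (intervalIntegral.intervalIntegrable_rpow' (by linarith))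
    (fun s hs => one_le_rpow_of_pos_of_le_one_of_nonpos hs.1 hs.2.le (by linarith))
    hder (fun t ht => (hpos t ht).le) hineq⟩
end
end

section
/- Let 0 ≤ γ < 1, p > 1 with pγ ≤ 1, a > 0, b > 0. Then there is no T = ∞ solution: that is, there exists no function w ∈ C¹([0,∞)) with w > 0 on [0,∞) satisfying w'(t) + a·w(t) ≥ b·∫_0^t (t−s)^{−γ} w(s)^p ds for all t ≥ 0. Equivalently, if w ∈ C¹([0,T]), w > 0, satisfies this integro-differential inequality on [0,T], and pγ ≤ 1, then necessarily T < ∞. -/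
open MeasureTheory Real Filter
open scoped ENNReal NNReal

noncomputable section

/-!
Put `F t = ∫₀ᵗ w ^ p`. Bounding the kernel `(t - s) ^ (-γ)` below by `t ^ (-γ)` and applying the
mean value theorem to `exp (a t) w` on a window of length `h ≤ 1` gives
`w s ≥ C h s ^ (-γ) F (s - h)`. Since `p γ ≤ 1`, the derivative `F' = w ^ p` satisfies the delay
inequality `F' s ≥ c h ^ p F (s - h) ^ p / s` for `s ≥ 1 + h` and every delay `h ∈ (0, 1]`.

With delay `1`, the weight `1 / s` integrates to a constant over `[t, 3 t]`, so `F (3 t)` exceeds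
`F t` by a multiple of `F t ^ p`. Hence `F (3 ^ n t)` grows faster than every geometric sequence,
and `F s ^ (p - 1)` is not bounded by a multiple of `s`. But once `F t ^ (p - 1)` is large compared
with `t + 4`, the delays `1, 1/2, 1/4, ...` multiply `F` by a fixed factor infinitely many times
before time `t + 4`.
-/

/-- The integrated form, over `[t + h, s]`, of the delay differential inequality
`F' x ≥ c * h ^ m * F (x - h) ^ p / x` for a nondecreasing `F` on `[1, ∞)` and all delays
`h ∈ (0, 1]`. Such an `F` would blow up in finite time if it were ever positive. -/
def DelayedGrowth (F : ℝ → ℝ) (c m p : ℝ) : Prop :=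
  ∀ ⦃t h s : ℝ⦄, 1 ≤ t → 0 < h → h ≤ 1 → t + h ≤ s →
    F t + (s - t - h) * (c * h ^ m * F t ^ p / s) ≤ F s

namespace DelayedGrowth

variable {F : ℝ → ℝ} {c m p t h s R : ℝ}

lemma apply_le_of_le (hF : DelayedGrowth F c m p) (hc : 0 ≤ c) (ht : 1 ≤ t) (hpos : 0 ≤ F t)
    (hts : t ≤ s) : F t ≤ F s := by
  obtain rfl | hlt := hts.eq_or_lt
  · rfl
  have hh : 0 < min 1 (s - t) := lt_min one_pos (sub_pos.2 hlt)
  have hhs : t + min 1 (s - t) ≤ s := by linarith [min_le_right 1 (s - t)]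
  have hs : 0 < s := by linarith
  have hgain : 0 ≤ (s - t - min 1 (s - t)) * (c * min 1 (s - t) ^ m * F t ^ p / s) :=
    mul_nonneg (by linarith) (by positivity)
  linarith [hF ht hh (min_le_left _ _) hhs]

lemma one_add_mul_le (hF : DelayedGrowth F c m p) (ht : 1 ≤ t) (hh : 0 < h) (hh1 : h ≤ 1)
    (hts : t + h ≤ s) (hpos : 0 < F t)
    (hR : R * s ≤ (s - t - h) * (c * h ^ m * F t ^ (p - 1))) : (1 + R) * F t ≤ F s := by
  have hs : 0 < s := by linarith
  calc (1 + R) * F t = F t + R * F t := by ring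
    _ ≤ F t + (s - t - h) * (c * h ^ m * F t ^ (p - 1)) / s * F t := by
      gcongr
      rwa [le_div_iff₀ hs]
    _ = F t + (s - t - h) * (c * h ^ m * F t ^ p / s) := by
      rw [rpow_sub_one hpos.ne']
      field_simp
    _ ≤ F s := hF ht hh hh1 hts

lemma one_add_mul_le_three_mul (hF : DelayedGrowth F c m p) (hc : 0 ≤ c) (ht : 1 ≤ t)
    (hpos : 0 < F t) (hR : 3 * R ≤ c * F t ^ (p - 1)) : (1 + R) * F t ≤ F (3 * t) := by
  refine hF.one_add_mul_le ht one_pos le_rfl (by linarith) hpos ?_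
  calc R * (3 * t) = t * (3 * R) := by ring
    _ ≤ t * (c * F t ^ (p - 1)) := by gcongr
    _ ≤ (3 * t - t - 1) * (c * F t ^ (p - 1)) := by
      gcongr
      linarith
    _ = (3 * t - t - 1) * (c * 1 ^ m * F t ^ (p - 1)) := by rw [one_rpow, mul_one]

lemma le_three_pow_mul (hF : DelayedGrowth F c m p) (hc : 0 ≤ c) (ht : 1 ≤ t) (hpos : 0 ≤ F t)
    (n : ℕ) : F t ≤ F (3 ^ n * t) :=
  hF.apply_le_of_le hc ht hpos (le_mul_of_one_le_left (by linarith) (one_le_pow₀ (by norm_num)))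

lemma tendsto_three_pow_mul (hF : DelayedGrowth F c m p) (hc : 0 < c) (hp : 1 ≤ p) (ht : 1 ≤ t)
    (hpos : 0 < F t) : Tendsto (fun n : ℕ ↦ F (3 ^ n * t)) atTop atTop := by
  have hratio : 0 < c * F t ^ (p - 1) / 3 := by positivity
  refine tendsto_atTop_of_geom_le (c := 1 + c * F t ^ (p - 1) / 3) (by simpa using hpos)
    (by linarith) fun n ↦ ?_
  have hle : F t ≤ F (3 ^ n * t) := hF.le_three_pow_mul hc.le ht hpos.le n
  rw [pow_succ', mul_assoc]
  refine hF.one_add_mul_le_three_mul hc.le (one_le_mul_of_one_le_of_one_le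
    (one_le_pow₀ (by norm_num)) ht) (hpos.trans_le hle) ?_
  calc 3 * (c * F t ^ (p - 1) / 3) = c * F t ^ (p - 1) := by ring
    _ ≤ c * F (3 ^ n * t) ^ (p - 1) := by gcongr

lemma tendsto_three_pow_mul_rpow_div (hF : DelayedGrowth F c m p) (hc : 0 < c) (hp : 1 < p)
    (ht : 1 ≤ t) (hpos : 0 < F t) :
    Tendsto (fun n : ℕ ↦ F (3 ^ n * t) ^ (p - 1) / 3 ^ n) atTop atTop := by
  have hp' : 0 < p - 1 := sub_pos.2 hp
  have hFpos (n : ℕ) : 0 < F (3 ^ n * t) :=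
    hpos.trans_le (hF.le_three_pow_mul hc.le ht hpos.le n)
  let M : ℝ := 6 ^ (p - 1)⁻¹
  have hM : M ^ (p - 1) = 6 := rpow_inv_rpow (by norm_num) hp'.ne'
  obtain ⟨N, hN⟩ := eventually_atTop.1 <| (((tendsto_rpow_atTop hp').comp
    (hF.tendsto_three_pow_mul hc hp.le ht hpos)).const_mul_atTop hc).eventually_ge_atTop (3 * M)
  have hstep (n : ℕ) (hn : N ≤ n) : M * F (3 ^ n * t) ≤ F (3 ^ (n + 1) * t) := by
    rw [pow_succ', mul_assoc]
    have := hF.one_add_mul_le_three_mul hc.le (one_le_mul_of_one_le_of_one_le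
      (one_le_pow₀ (by norm_num)) ht) (hFpos n) (hN n hn)
    linarith [hFpos n]
  refine (tendsto_add_atTop_iff_nat N).1 <| tendsto_atTop_of_geom_le (c := 2)
    (div_pos (rpow_pos_of_pos (hFpos _) _) (by positivity)) one_lt_two fun n ↦ ?_
  calc 2 * (F (3 ^ (n + N) * t) ^ (p - 1) / 3 ^ (n + N))
      = M ^ (p - 1) * F (3 ^ (n + N) * t) ^ (p - 1) / 3 ^ (n + N + 1) := by
        rw [hM, pow_succ]
        ring
    _ = (M * F (3 ^ (n + N) * t)) ^ (p - 1) / 3 ^ (n + N + 1) := by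
        rw [mul_rpow (by positivity) (hFpos _).le]
    _ ≤ F (3 ^ (n + N + 1) * t) ^ (p - 1) / 3 ^ (n + N + 1) := by
        have := (hFpos (n + N)).le
        gcongr
        exact hstep _ (Nat.le_add_left N n)
    _ = F (3 ^ (n + 1 + N) * t) ^ (p - 1) / 3 ^ (n + 1 + N) := by rw [Nat.add_right_comm]

-- The node `t + 4 - 4 * 2⁻ⁿ` is reached from `t` by steps of lengths `2 * 2⁻ᵏ`, `k < n`, each of
-- them half delay and half growth.
lemma pow_mul_le_dyadic_node (hF : DelayedGrowth F c m p) (hc : 0 < c) (hp : 1 ≤ p) (ht : 1 ≤ t)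
    (hpos : 0 < F t) (hR : 0 < R) (hRpow : R ^ (p - 1) = 2 ^ (m + 1))
    (hlarge : R * (t + 4) ≤ c * F t ^ (p - 1)) (n : ℕ) :
    R ^ n * F t ≤ F (t + 4 - 4 * (1 / 2) ^ n) := by
  induction n with
  | zero => simp
  | succ n ih =>
    set h : ℝ := (1 / 2) ^ n with hh_def
    have hh : 0 < h := by positivity
    have hh1 : h ≤ 1 := pow_le_one₀ (by norm_num) (by norm_num)
    have hnode : t + 4 - 4 * (1 / 2) ^ (n + 1) = t + 4 - 4 * h + 2 * h := by
      rw [pow_succ, ← hh_def]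
      ring
    have hFnode : 0 < F (t + 4 - 4 * h) := lt_of_lt_of_le (by positivity) ih
    have hscale : h ^ (m + 1) * (R ^ n) ^ (p - 1) = 1 := by
      rw [← rpow_pow_comm hR.le, hRpow, hh_def, ← rpow_pow_comm (by norm_num), ← mul_pow,
        ← mul_rpow (by norm_num) (by norm_num)]
      norm_num
    have hgain : R * (t + 4 - 4 * h + 2 * h) ≤ h * (c * h ^ m * F (t + 4 - 4 * h) ^ (p - 1)) :=
      calc R * (t + 4 - 4 * h + 2 * h)
          ≤ R * (t + 4) := mul_le_mul_of_nonneg_left (by linarith) hR.le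
        _ ≤ c * F t ^ (p - 1) * (h ^ (m + 1) * (R ^ n) ^ (p - 1)) := by rwa [hscale, mul_one]
        _ = h * (c * h ^ m * (R ^ n * F t) ^ (p - 1)) := by
          rw [mul_rpow (by positivity) hpos.le, rpow_add_one hh.ne']
          ring
        _ ≤ h * (c * h ^ m * F (t + 4 - 4 * h) ^ (p - 1)) := by
          gcongr
    rw [hnode]
    calc R ^ (n + 1) * F t = R * (R ^ n * F t) := by ring
      _ ≤ R * F (t + 4 - 4 * h) := by gcongr
      _ ≤ (1 + R) * F (t + 4 - 4 * h) := by linarith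
      _ ≤ F (t + 4 - 4 * h + 2 * h) :=
        hF.one_add_mul_le (by linarith) hh hh1 (by linarith) hFnode (by convert hgain using 2; ring)

lemma mul_rpow_lt (hF : DelayedGrowth F c m p) (hc : 0 < c) (hm : -1 < m) (hp : 1 < p)
    (ht : 1 ≤ t) (hpos : 0 < F t) :
    c * F t ^ (p - 1) < 2 ^ ((m + 1) / (p - 1)) * (t + 4) := by
  by_contra! hlarge
  set R : ℝ := 2 ^ ((m + 1) / (p - 1)) with hR_def
  have hp' : 0 < p - 1 := sub_pos.2 hp
  have hR : 1 < R := one_lt_rpow one_lt_two (div_pos (by linarith) hp')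
  have hRpow : R ^ (p - 1) = 2 ^ (m + 1) := by
    rw [hR_def, ← rpow_mul zero_le_two, div_mul_cancel₀ _ hp'.ne']
  obtain ⟨n, hn⟩ := pow_unbounded_of_one_lt (F (t + 4) / F t) hR
  rw [div_lt_iff₀ hpos] at hn
  have hnode := hF.pow_mul_le_dyadic_node hc hp.le ht hpos (by positivity) hRpow hlarge n
  have hhalf : (1 / 2 : ℝ) ^ n ≤ 1 := pow_le_one₀ (by norm_num) (by norm_num)
  have hend : F (t + 4 - 4 * (1 / 2) ^ n) ≤ F (t + 4) :=
    hF.apply_le_of_le hc.le (by linarith) (le_trans (by positivity) hnode)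
      (sub_le_self _ (by positivity))
  linarith

theorem nonpos (hF : DelayedGrowth F c m p) (hc : 0 < c) (hm : -1 < m) (hp : 1 < p)
    (ht : 1 ≤ t) : F t ≤ 0 := by
  by_contra! hpos
  set R : ℝ := 2 ^ ((m + 1) / (p - 1))
  obtain ⟨n, hn⟩ := ((hF.tendsto_three_pow_mul_rpow_div hc hp ht hpos).eventually_ge_atTop
    (R * (5 * t) / c)).exists
  have hpow : (1 : ℝ) ≤ 3 ^ n := one_le_pow₀ (by norm_num)
  have hnode : 1 ≤ 3 ^ n * t := one_le_mul_of_one_le_of_one_le hpow ht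
  have hupper := hF.mul_rpow_lt hc hm hp hnode
    (hpos.trans_le (hF.le_three_pow_mul hc.le ht hpos.le n))
  rw [div_le_div_iff₀ hc (by positivity)] at hn
  have hcompare : R * (3 ^ n * t + 4) ≤ R * (5 * t) * 3 ^ n :=
    calc R * (3 ^ n * t + 4) ≤ R * (5 * (3 ^ n * t)) := by gcongr; linarith
      _ = R * (5 * t) * 3 ^ n := by ring
  linarith

end DelayedGrowth

open intervalIntegral in
lemma delayedGrowth_integral {f : ℝ → ℝ} {c m p : ℝ} (hf : ContinuousOn f (Set.Ici 0))
    (hf0 : ∀ x ∈ Set.Ici 0, 0 ≤ f x) (hc : 0 ≤ c) (hp : 0 ≤ p)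
    (hdelay : ∀ x h, 0 < h → h ≤ 1 → 1 + h ≤ x →
      c * h ^ m * (∫ y in 0..(x - h), f y) ^ p / x ≤ f x) :
    DelayedGrowth (fun t ↦ ∫ y in 0..t, f y) c m p := by
  intro t h s ht hh hh1 hts
  have hint {u v : ℝ} (hu : 0 ≤ u) (huv : u ≤ v) : IntervalIntegrable f volume u v :=
    (hf.mono fun x hx ↦ hu.trans (Set.uIcc_of_le huv ▸ hx).1).intervalIntegrable
  have hnonneg {u v : ℝ} (hu : 0 ≤ u) (huv : u ≤ v) : 0 ≤ ∫ y in u..v, f y :=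
    integral_nonneg huv fun x hx ↦ hf0 x (hu.trans hx.1)
  have hsplit {u v : ℝ} (hu : 0 ≤ u) (huv : u ≤ v) :
      ∫ y in 0..v, f y = (∫ y in 0..u, f y) + ∫ y in u..v, f y :=
    (integral_add_adjacent_intervals (hint le_rfl hu) (hint hu huv)).symm
  have hgrowth : (s - t - h) * (c * h ^ m * (∫ y in 0..t, f y) ^ p / s) ≤
      ∫ y in (t + h)..s, f y := by
    rw [sub_sub, ← smul_eq_mul, ← intervalIntegral.integral_const]
    refine integral_mono_on hts intervalIntegrable_const (hint (by linarith) hts) fun x hx ↦ ?_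
    refine le_trans ?_ (hdelay x h hh hh1 (by linarith [hx.1]))
    have hFt : 0 ≤ ∫ y in 0..t, f y := hnonneg le_rfl (by linarith)
    have hFx : ∫ y in 0..t, f y ≤ ∫ y in 0..(x - h), f y := by
      have htx : t ≤ x - h := by linarith [hx.1]
      linarith [hsplit (by linarith) htx, hnonneg (by linarith) htx]
    have hFx0 : 0 ≤ ∫ y in 0..(x - h), f y := hFt.trans hFx
    have hx0 : 0 < x := by linarith [hx.1]
    gcongr
    exact hx.2
  dsimp only
  linarith [hsplit (show 0 ≤ t by linarith) (show t ≤ t + h by linarith),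
    hsplit (show 0 ≤ t + h by linarith) hts,
    hnonneg (show 0 ≤ t by linarith) (show t ≤ t + h by linarith)]

lemma rpow_neg_mul_integral_le_integral_sub_rpow_neg_mul {γ t : ℝ} {f : ℝ → ℝ} (hγ0 : 0 ≤ γ)
    (hγ1 : γ < 1) (ht : 0 ≤ t) (hf : ContinuousOn f (Set.Icc 0 t))
    (hf0 : ∀ s ∈ Set.Ioo 0 t, 0 ≤ f s) :
    t ^ (-γ) * ∫ s in 0..t, f s ≤ ∫ s in 0..t, (t - s) ^ (-γ) * f s := by
  rw [← Set.uIcc_of_le ht] at hf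
  have hkernel : IntervalIntegrable (fun s ↦ (t - s) ^ (-γ)) volume 0 t := by
    simpa using ((intervalIntegral.intervalIntegrable_rpow' (a := 0) (b := t)
      (by linarith : -1 < -γ)).comp_sub_left t).symm
  rw [← intervalIntegral.integral_const_mul]
  refine intervalIntegral.integral_mono_on_of_le_Ioo ht (hf.intervalIntegrable.const_mul _)
    (hkernel.mul_continuousOn hf) fun s hs ↦ mul_le_mul_of_nonneg_right ?_ (hf0 s hs)
  exact rpow_le_rpow_of_nonpos (sub_pos.2 hs.2) (by linarith [hs.1]) (by linarith)

lemma exp_mul_mul_sub_le_of_le_deriv_add_mul {w w' : ℝ → ℝ} {a K u s : ℝ} (hus : u < s)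
    (hcont : ContinuousOn w (Set.Icc u s)) (hderiv : ∀ x ∈ Set.Ioo u s, HasDerivAt w (w' x) x)
    (hwu : 0 ≤ w u) (hK : 0 ≤ K) (hineq : ∀ x ∈ Set.Ioo u s, K ≤ w' x + a * w x) :
    exp (-|a| * (s - u)) * K * (s - u) ≤ w s := by
  have hderiv_exp (x : ℝ) (hx : x ∈ Set.Ioo u s) :
      HasDerivAt (fun x ↦ exp (a * (x - s)) * w x) (exp (a * (x - s)) * (w' x + a * w x)) x := by
    have hexp : HasDerivAt (fun x ↦ exp (a * (x - s))) (exp (a * (x - s)) * a) x := by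
      simpa using (((hasDerivAt_id x).sub_const s).const_mul a).exp
    exact (hexp.mul (hderiv x hx)).congr_deriv (by ring)
  obtain ⟨x, hx, hslope⟩ := exists_hasDerivAt_eq_slope (fun x ↦ exp (a * (x - s)) * w x) _ hus
    (ContinuousOn.mul (by fun_prop) hcont) hderiv_exp
  have hexp_le : exp (-|a| * (s - u)) ≤ exp (a * (x - s)) := by
    rw [exp_le_exp]
    calc -|a| * (s - u) ≤ -|a| * (s - x) :=
          mul_le_mul_of_nonpos_left (by linarith [hx.1]) (neg_nonpos.2 (abs_nonneg a))
      _ ≤ -a * (s - x) := by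
          gcongr
          · linarith [hx.2]
          · exact le_abs_self a
      _ = a * (x - s) := by ring
  rw [eq_div_iff (sub_pos.2 hus).ne'] at hslope
  calc exp (-|a| * (s - u)) * K * (s - u)
      ≤ exp (a * (x - s)) * (w' x + a * w x) * (s - u) := by
        refine mul_le_mul_of_nonneg_right ?_ (sub_pos.2 hus).le
        exact mul_le_mul hexp_le (hineq x hx) hK (exp_pos _).le
    _ = w s - exp (a * (u - s)) * w u := by simpa using hslope
    _ ≤ w s := sub_le_self _ (by positivity)

/-- A positive function `w` with derivative `w'` on `[0, ∞)` satisfying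
`w' + a w ≥ b ∫₀ᵗ (t - s) ^ (-γ) w(s) ^ p ds` there. The derivative at `0` is one-sided, and `w'`
may be discontinuous. -/
structure IsPositiveSupersolution (γ p a b : ℝ) (w w' : ℝ → ℝ) : Prop where
  hasDerivWithinAt : ∀ t ∈ Set.Ici (0 : ℝ), HasDerivWithinAt w (w' t) (Set.Ici 0) t
  pos : ∀ t ∈ Set.Ici (0 : ℝ), 0 < w t
  le_deriv_add_mul : ∀ t ∈ Set.Ici (0 : ℝ),
    b * ∫ s in Set.Ioc (0 : ℝ) t, (t - s) ^ (-γ) * w s ^ p ≤ w' t + a * w t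

namespace IsPositiveSupersolution

variable {γ p a b h s t : ℝ} {w w' : ℝ → ℝ}

lemma continuousOn (hw : IsPositiveSupersolution γ p a b w w') : ContinuousOn w (Set.Ici 0) :=
  fun t ht ↦ (hw.hasDerivWithinAt t ht).continuousWithinAt

lemma continuousOn_rpow (hw : IsPositiveSupersolution γ p a b w w') :
    ContinuousOn (fun t ↦ w t ^ p) (Set.Ici 0) :=
  hw.continuousOn.rpow_const fun t ht ↦ .inl (hw.pos t ht).ne'

lemma rpow_pos (hw : IsPositiveSupersolution γ p a b w w') (ht : t ∈ Set.Ici 0) : 0 < w t ^ p :=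
  rpow_pos_of_pos (hw.pos t ht) p

lemma intervalIntegrable_rpow (hw : IsPositiveSupersolution γ p a b w w') (ht : 0 ≤ t) :
    IntervalIntegrable (fun t ↦ w t ^ p) volume 0 t :=
  (hw.continuousOn_rpow.mono (Set.uIcc_of_le ht ▸ Set.Icc_subset_Ici_self)).intervalIntegrable

lemma integral_rpow_nonneg (hw : IsPositiveSupersolution γ p a b w w') (ht : 0 ≤ t) :
    0 ≤ ∫ x in 0..t, w x ^ p :=
  intervalIntegral.integral_nonneg ht fun _ hx ↦ (hw.rpow_pos hx.1).le

lemma integral_rpow_le (hw : IsPositiveSupersolution γ p a b w w') (hs : 0 ≤ s) (hst : s ≤ t) :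
    ∫ x in 0..s, w x ^ p ≤ ∫ x in 0..t, w x ^ p :=
  intervalIntegral.integral_mono_interval le_rfl hs hst
    (ae_restrict_of_forall_mem measurableSet_Ioc fun _ hx ↦ (hw.rpow_pos hx.1.le).le)
    (hw.intervalIntegrable_rpow (hs.trans hst))

lemma mul_integral_le_deriv_add_mul (hw : IsPositiveSupersolution γ p a b w w') (hγ0 : 0 ≤ γ)
    (hγ1 : γ < 1) (hb : 0 ≤ b) (ht : 0 ≤ t) :
    b * (t ^ (-γ) * ∫ x in 0..t, w x ^ p) ≤ w' t + a * w t := by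
  refine le_trans ?_ (hw.le_deriv_add_mul t ht)
  rw [← intervalIntegral.integral_of_le ht]
  gcongr
  exact rpow_neg_mul_integral_le_integral_sub_rpow_neg_mul hγ0 hγ1 ht
    (hw.continuousOn_rpow.mono Set.Icc_subset_Ici_self) fun x hx ↦ (hw.rpow_pos hx.1.le).le

lemma mul_integral_sub_le (hw : IsPositiveSupersolution γ p a b w w') (hγ0 : 0 ≤ γ) (hγ1 : γ < 1)
    (hb : 0 ≤ b) (hh : 0 < h) (hh1 : h ≤ 1) (hhs : h ≤ s) :
    b * exp (-|a|) * h * s ^ (-γ) * ∫ x in 0..(s - h), w x ^ p ≤ w s := by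
  have hs : 0 < s := by linarith
  have hu : 0 ≤ s - h := by linarith
  have hF : 0 ≤ ∫ x in 0..(s - h), w x ^ p := hw.integral_rpow_nonneg hu
  have hineq (x : ℝ) (hx : x ∈ Set.Ioo (s - h) s) :
      b * (s ^ (-γ) * ∫ y in 0..(s - h), w y ^ p) ≤ w' x + a * w x := by
    have hx0 : 0 < x := hu.trans_lt hx.1
    refine le_trans ?_ (hw.mul_integral_le_deriv_add_mul hγ0 hγ1 hb hx0.le)
    gcongr b * (?_ * ?_)
    · exact rpow_le_rpow_of_nonpos hx0 hx.2.le (by linarith)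
    · exact hw.integral_rpow_le hu hx.1.le
  have hderiv (x : ℝ) (hx : x ∈ Set.Ioo (s - h) s) : HasDerivAt w (w' x) x :=
    have hx0 : 0 < x := hu.trans_lt hx.1
    (hw.hasDerivWithinAt x hx0.le).hasDerivAt (Ici_mem_nhds hx0)
  have hlower := exp_mul_mul_sub_le_of_le_deriv_add_mul (sub_lt_self s hh)
    (hw.continuousOn.mono fun x hx ↦ hu.trans hx.1) hderiv (hw.pos _ hu).le
    (mul_nonneg hb (by positivity)) hineq
  rw [sub_sub_cancel] at hlower
  calc b * exp (-|a|) * h * s ^ (-γ) * ∫ x in 0..(s - h), w x ^ p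
      = exp (-|a|) * (b * (s ^ (-γ) * ∫ x in 0..(s - h), w x ^ p)) * h := by ring
    _ ≤ exp (-|a| * h) * (b * (s ^ (-γ) * ∫ x in 0..(s - h), w x ^ p)) * h := by
      gcongr
      nlinarith [abs_nonneg a]
    _ ≤ w s := hlower

lemma delayedGrowth (hw : IsPositiveSupersolution γ p a b w w') (hγ0 : 0 ≤ γ) (hγ1 : γ < 1)
    (hp : 0 ≤ p) (hpγ : p * γ ≤ 1) (hb : 0 ≤ b) :
    DelayedGrowth (fun t ↦ ∫ x in 0..t, w x ^ p) ((b * exp (-|a|)) ^ p) p p := by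
  refine delayedGrowth_integral hw.continuousOn_rpow (fun x hx ↦ (hw.rpow_pos hx).le)
    (by positivity) hp fun s h hh hh1 hs ↦ ?_
  have hs0 : 0 < s := by linarith
  have hF : 0 ≤ ∫ x in 0..(s - h), w x ^ p := hw.integral_rpow_nonneg (by linarith)
  have hcritical : s⁻¹ ≤ (s ^ (-γ)) ^ p := by
    rw [← rpow_mul hs0.le, ← rpow_neg_one]
    exact rpow_le_rpow_of_exponent_le (by linarith) (by linarith)
  calc (b * exp (-|a|)) ^ p * h ^ p * (∫ x in 0..(s - h), w x ^ p) ^ p / s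
      = (b * exp (-|a|)) ^ p * h ^ p * s⁻¹ * (∫ x in 0..(s - h), w x ^ p) ^ p := by ring
    _ ≤ (b * exp (-|a|)) ^ p * h ^ p * (s ^ (-γ)) ^ p * (∫ x in 0..(s - h), w x ^ p) ^ p := by
      gcongr
    _ = (b * exp (-|a|) * h * s ^ (-γ) * ∫ x in 0..(s - h), w x ^ p) ^ p := by
      rw [mul_rpow (y := ∫ x in 0..(s - h), w x ^ p) (by positivity) hF,
        mul_rpow (y := s ^ (-γ)) (by positivity) (by positivity),
        mul_rpow (y := h) (by positivity) hh.le]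
    _ ≤ w s ^ p := by
      gcongr
      exact hw.mul_integral_sub_le hγ0 hγ1 hb hh hh1 (by linarith)

end IsPositiveSupersolution

theorem no_global_integro_differential_solution_general {γ p a b : ℝ} (hγ : 0 ≤ γ) (hp : 1 < p)
    (hpγ : p * γ ≤ 1) (hb : 0 < b) : ¬ ∃ w w' : ℝ → ℝ, IsPositiveSupersolution γ p a b w w' := by
  rintro ⟨w, w', hw⟩
  have hγ1 : γ < 1 := by nlinarith
  have hgrowth := hw.delayedGrowth hγ hγ1 (by linarith) hpγ hb.le
  have hpos : 0 < ∫ x in (0 : ℝ)..1, w x ^ p :=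
    intervalIntegral.intervalIntegral_pos_of_pos_on (hw.intervalIntegrable_rpow zero_le_one)
      (fun x hx ↦ hw.rpow_pos hx.1.le) one_pos
  exact hpos.not_ge (hgrowth.nonpos (by positivity) (by linarith) hp le_rfl)

/-- **Lemma (Cazenave–Dickstein–Weissler, part (ii)).**
Let `0 ≤ γ < 1`, `p > 1` with `pγ ≤ 1`, and `a, b > 0`. Then there is no positive
`w ∈ C¹([0,∞))` satisfying `w'(t) + a w(t) ≥ b ∫_0^t (t−s)^{−γ} w(s)^p ds` for all
`t ≥ 0`. -/
theorem no_global_integro_differential_solution (γ p a b : ℝ)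
    (hγ0 : 0 ≤ γ) (hγ1 : γ < 1) (hp : 1 < p) (hpγ : p * γ ≤ 1)
    (ha : 0 < a) (hb : 0 < b) :
    ¬ ∃ w w' : ℝ → ℝ,
        (∀ t ∈ Set.Ici (0 : ℝ), HasDerivWithinAt w (w' t) (Set.Ici 0) t) ∧
        ContinuousOn w' (Set.Ici 0) ∧
        (∀ t ∈ Set.Ici (0 : ℝ), 0 < w t) ∧
        (∀ t ∈ Set.Ici (0 : ℝ),
          b * ∫ s in Set.Ioc (0 : ℝ) t, (t - s) ^ (-γ) * w s ^ p ≤ w' t + a * w t) := by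
  rintro ⟨w, w', hw, -, hpos, hineq⟩
  exact no_global_integro_differential_solution_general hγ0 hp hpγ hb ⟨w, w', hw, hpos, hineq⟩
end
end
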